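/- arXiv:cs/0504027 — 9 statements merged into one kernel-verified Lean document; each statement's English description precedes it below -/
import Mathlib

section
/- Let 0 ≤ j ≤ k be non-negative integers and let C be a class of finite τ-structures whose complement ¬C is the ideal generated by finitely many τ-structures B_1,…,B_m (that is, a structure A lies in ¬C if and only if A → B_i for some i). Suppose that for all finite τ-structures A and B, if A ∈ C and the Duplicator has a winning strategy for the (j,k)-pebble-relation game on A and B, then B ∈ C. Then ¬C has an obstruction set all of whose members have pathwidth at most (j,k). -/
/-- A relational structure over vocabulary `σ` with arities `ar`. -/
structure Struct (σ : Type) (ar : σ → ℕ) where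
  carrier : Type
  rel : ∀ s : σ, Set (Fin (ar s) → carrier)

namespace Struct

variable {σ : Type} {ar : σ → ℕ}

/-- `h` is a homomorphism from `A` to `B`. -/
def IsHom (A B : Struct σ ar) (h : A.carrier → B.carrier) : Prop :=
  ∀ s (t : Fin (ar s) → A.carrier), t ∈ A.rel s → (fun i => h (t i)) ∈ B.rel s

/-- `A` homomorphically maps to `B`. -/
def HomTo (A B : Struct σ ar) : Prop := ∃ h, IsHom A B h

/-- `f : I → B` is a homomorphism from the induced substructure `A|I` to `B`. -/
def IsPHom (A B : Struct σ ar) (I : Set A.carrier) (f : ↥I → B.carrier) : Prop :=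
  ∀ s (t : Fin (ar s) → A.carrier) (ht : ∀ i, t i ∈ I),
    t ∈ A.rel s → (fun i => f ⟨t i, ht i⟩) ∈ B.rel s

/-- `S_1,…,S_n` is a path-decomposition of `A`. -/
def IsPathDecomp (A : Struct σ ar) {n : ℕ} (S : Fin n → Set A.carrier) : Prop :=
  (∀ s (t : Fin (ar s) → A.carrier), t ∈ A.rel s → ∃ i, ∀ m, t m ∈ S i) ∧
  (∀ a : A.carrier, ∀ i l p : Fin n, i ≤ l → l ≤ p → a ∈ S i → a ∈ S p → a ∈ S l)

/-- The path-decomposition `S` has width at most `(j,k)`. -/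
def DecompWidthLE {A : Struct σ ar} {n : ℕ} (S : Fin n → Set A.carrier)
    (j k : ℕ) : Prop :=
  (∀ i, (S i).Finite ∧ (S i).ncard ≤ k) ∧
  (∀ i : Fin n, ∀ h : (i : ℕ) + 1 < n, (S i ∩ S ⟨(i : ℕ) + 1, h⟩).ncard ≤ j)

/-- `A` has pathwidth at most `(j,k)`. -/
def PathwidthLE (A : Struct σ ar) (j k : ℕ) : Prop :=
  ∃ (n : ℕ) (S : Fin n → Set A.carrier), IsPathDecomp A S ∧ DecompWidthLE S j k

end Struct

/-- Restriction of a function with domain `I` to a subdomain `I'`. -/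
def resFun {α β : Type} {I I' : Set α} (h : I' ⊆ I) (f : ↥I → β) : ↥I' → β :=
  fun x => f ⟨x.1, h x.2⟩

/-- Restriction of a relation (set of functions) with domain `I` to `I'`. -/
def resRel {α β : Type} {I I' : Set α} (h : I' ⊆ I) (T : Set (↥I → β)) :
    Set (↥I' → β) :=
  resFun h '' T

/-- `H` is a winning strategy for the Duplicator in the `(j,k)`-pebble-relation
game on `A` and `B`.  `H I` is the set of relations in `H` having domain `I`. -/
def IsWinning {σ : Type} {ar : σ → ℕ} (A B : Struct σ ar) (j k : ℕ)
    (H : ∀ I : Set A.carrier, Set (Set (↥I → B.carrier))) : Prop :=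
  (∃ I, ∃ T, T ∈ H I) ∧
  (∀ I, ∀ T ∈ H I, I.Finite ∧ I.ncard ≤ k) ∧
  (∀ I, ∀ T ∈ H I, T.Nonempty ∧ ∀ f ∈ T, Struct.IsPHom A B I f) ∧
  (∀ I, ∀ T ∈ H I, ∀ I' : Set A.carrier, ∀ h : I' ⊆ I, resRel h T ∈ H I') ∧
  (∀ I, ∀ T ∈ H I, I.ncard ≤ j → ∀ I' : Set A.carrier, ∀ h : I ⊆ I',
    I'.Finite → I'.ncard ≤ k → ∃ T' ∈ H I', resRel h T' ⊆ T)

/-- The Duplicator has a winning strategy for the `(j,k)`-pebble-relation game. -/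
def HasWinStrategy {σ : Type} {ar : σ → ℕ} (A B : Struct σ ar) (j k : ℕ) : Prop :=
  ∃ H, IsWinning A B j k H


/-- Path decomposition with bags indexed by `0..N`. -/
def NDecomp {σ : Type} {ar : σ → ℕ} (P : Struct σ ar) (N j k : ℕ) (S : ℕ → Set P.carrier) : Prop :=
  (∀ s (t : Fin (ar s) → P.carrier), t ∈ P.rel s → ∃ i ≤ N, ∀ m, t m ∈ S i) ∧
  (∀ a : P.carrier, ∀ i l p : ℕ, i ≤ l → l ≤ p → p ≤ N → a ∈ S i → a ∈ S p → a ∈ S l) ∧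
  (∀ i ≤ N, (S i).ncard ≤ k) ∧
  (∀ i, i + 1 ≤ N → (S i ∩ S (i + 1)).ncard ≤ j)

theorem NDecomp.pw {σ : Type} {ar : σ → ℕ} {P : Struct σ ar} [Finite P.carrier] {N j k : ℕ}
    {S : ℕ → Set P.carrier} (h : NDecomp P N j k S) : Struct.PathwidthLE P j k := by
  obtain ⟨h1, h2, h3, h4⟩ := h
  refine ⟨N + 1, fun i => S i, ⟨?_, ?_⟩, ?_, ?_⟩
  · intro s t ht
    obtain ⟨i, hi, hm⟩ := h1 s t ht
    exact ⟨⟨i, by omega⟩, hm⟩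
  · intro a i l p hil hlp
    exact h2 a i l p hil hlp (by omega)
  · intro i
    exact ⟨Set.toFinite _, h3 i (by omega)⟩
  · intro i h
    exact h4 i (by omega)

/-- Disjoint union. -/
@[reducible] def dsum {σ : Type} {ar : σ → ℕ} (P Q : Struct σ ar) : Struct σ ar where
  carrier := P.carrier ⊕ Q.carrier
  rel s := {u | (∃ t ∈ P.rel s, u = fun i => Sum.inl (t i)) ∨
    (∃ t ∈ Q.rel s, u = fun i => Sum.inr (t i))}

theorem dsum_decomp {σ : Type} {ar : σ → ℕ} {P Q : Struct σ ar} {N M j k : ℕ}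
    {S : ℕ → Set P.carrier} {R : ℕ → Set Q.carrier}
    (hS : NDecomp P N j k S) (hR : NDecomp Q M j k R) :
    NDecomp (dsum P Q) (N + 1 + M) j k
      (fun i => if i ≤ N then Sum.inl '' S i else Sum.inr '' R (i - (N + 1))) := by
  obtain ⟨h1, h2, h3, h4⟩ := hS
  obtain ⟨g1, g2, g3, g4⟩ := hR
  refine ⟨?_, ?_, ?_, ?_⟩
  · rintro s u (⟨t, ht, rfl⟩ | ⟨t, ht, rfl⟩)
    · obtain ⟨i, hi, hm⟩ := h1 s t ht
      refine ⟨i, by omega, fun m => ?_⟩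
      dsimp only
      rw [if_pos hi]
      exact ⟨_, hm m, rfl⟩
    · obtain ⟨i, hi, hm⟩ := g1 s t ht
      refine ⟨N + 1 + i, by omega, fun m => ?_⟩
      dsimp only
      rw [if_neg (by omega), Nat.add_sub_cancel_left]
      exact ⟨_, hm m, rfl⟩
  · intro a i l p hil hlp hp hi hp'
    dsimp only at hi hp' ⊢
    split_ifs at hi with ci
    · obtain ⟨b, hb, rfl⟩ := hi
      split_ifs at hp' with cp
      · obtain ⟨b', hb', e⟩ := hp'
        cases e
        rw [if_pos (by omega)]
        exact ⟨b, h2 b i l p hil hlp cp hb hb', rfl⟩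
      · obtain ⟨b', hb', e⟩ := hp'
        cases e
    · obtain ⟨b, hb, rfl⟩ := hi
      rw [if_neg (by omega)] at hp' ⊢
      obtain ⟨b', hb', e⟩ := hp'
      cases e
      exact ⟨b, g2 b _ _ _ (by omega) (by omega) (by omega) hb hb', rfl⟩
  · intro i hi
    dsimp only
    split_ifs with c
    · rw [Set.ncard_image_of_injective _ Sum.inl_injective]
      exact h3 i c
    · rw [Set.ncard_image_of_injective _ Sum.inr_injective]
      exact g3 _ (by omega)
  · intro i hi
    dsimp only
    by_cases c : i + 1 ≤ N
    · rw [if_pos c, if_pos (by omega), ← Set.image_inter Sum.inl_injective,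
        Set.ncard_image_of_injective _ Sum.inl_injective]
      exact h4 i c
    · by_cases c' : i ≤ N
      · rw [if_neg c, if_pos c']
        have : (Sum.inl '' S i ∩ Sum.inr '' R (i + 1 - (N + 1)) :
            Set (P.carrier ⊕ Q.carrier)) = ∅ := by
          ext x
          simp only [Set.mem_inter_iff, Set.mem_image, Set.mem_empty_iff_false, iff_false]
          rintro ⟨⟨b, _, rfl⟩, ⟨b', _, e⟩⟩
          cases e
        rw [show (Sum.inl '' S i ∩ Sum.inr '' R (i + 1 - (N + 1)) :
            Set (dsum P Q).carrier) = ∅ from this, Set.ncard_empty]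
        exact Nat.zero_le _
      · rw [if_neg c, if_neg c', ← Set.image_inter Sum.inr_injective,
          Set.ncard_image_of_injective _ Sum.inr_injective,
          show i + 1 - (N + 1) = (i - (N + 1)) + 1 by omega]
        exact g4 _ (by omega)

/-- Pebbled approximations. -/
def Appr {σ : Type} {ar : σ → ℕ} (A : Struct σ ar) (j k : ℕ) (I : Set A.carrier)
    (P : Struct σ ar) (x : ↥I → P.carrier) : Prop :=
  Finite P.carrier ∧ ∃ (N : ℕ) (S : ℕ → Set P.carrier) (h : P.carrier → A.carrier),
    NDecomp P N j k S ∧ Struct.IsHom P A h ∧ (∀ a, h (x a) = a) ∧ (∀ a, x a ∈ S N) ∧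
    Struct.IsPHom A P I x

open Classical in
/-- new pebbles -/
noncomputable def newx {α β : Type} {I : Set α} (x : ↥I → β) (I' : Set α) (a : ↥I') :
    β ⊕ ↥(I' \ I) :=
  if c : a.1 ∈ I then Sum.inl (x ⟨a.1, c⟩) else Sum.inr ⟨a.1, a.2, c⟩

/-- glued structure -/
@[reducible] noncomputable def glue {σ : Type} {ar : σ → ℕ} (A : Struct σ ar) {I : Set A.carrier}
    (P : Struct σ ar) (x : ↥I → P.carrier) (I' : Set A.carrier) : Struct σ ar where
  carrier := P.carrier ⊕ ↥(I' \ I)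
  rel s := {u | (∃ t ∈ P.rel s, u = fun i => Sum.inl (t i)) ∨
    (∃ t : Fin (ar s) → A.carrier, ∃ ht : ∀ i, t i ∈ I', t ∈ A.rel s ∧
      u = fun i => newx x I' ⟨t i, ht i⟩)}

theorem glue_appr {σ : Type} {ar : σ → ℕ} {A : Struct σ ar} {j k : ℕ} {I : Set A.carrier}
    {P : Struct σ ar} {x : ↥I → P.carrier} (hP : Appr A j k I P x) (hI : I.Finite)
    (hIj : I.ncard ≤ j) {I' : Set A.carrier} (hI' : I'.Finite) (hk : I'.ncard ≤ k) :
    Appr A j k I' (glue A P x I') (newx x I') := by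
  obtain ⟨hfin, N, S, h, ⟨h1, h2, h3, h4⟩, hh, hx, hxS, hp⟩ := hP
  have : Finite ↥I' := hI'
  have : Finite ↥I := hI
  have fd : Finite ↥(I' \ I) := hI'.sdiff
  have hx' : ∀ a : ↥I', Sum.elim h Subtype.val (newx x I' a) = a.1 := by
    intro a
    unfold newx
    split_ifs with c
    · exact hx _
    · rfl
  have key : ∀ b : P.carrier, (Sum.inl b : P.carrier ⊕ ↥(I' \ I)) ∈ Set.range (newx x I') →
      b ∈ Set.range x := by
    rintro b ⟨a, ha⟩
    unfold newx at ha
    split_ifs at ha with c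
    · exact ⟨_, Sum.inl_injective ha⟩
  refine ⟨(inferInstance : Finite (P.carrier ⊕ ↥(I' \ I))), N + 1,
    (fun i => if i ≤ N then Sum.inl '' S i else Set.range (newx x I')),
    Sum.elim h Subtype.val, ⟨?_, ?_, ?_, ?_⟩, ?_, hx', ?_, ?_⟩
  · rintro s u (⟨t, ht, rfl⟩ | ⟨t, ht, _, rfl⟩)
    · obtain ⟨i, hi, hm⟩ := h1 s t ht
      refine ⟨i, by omega, fun m => ?_⟩
      dsimp only
      rw [if_pos hi]
      exact ⟨_, hm m, rfl⟩
    · refine ⟨N + 1, le_rfl, fun m => ?_⟩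
      dsimp only
      rw [if_neg (by omega)]
      exact ⟨_, rfl⟩
  · intro a i l p hil hlp hp hi hp'
    dsimp only at hi hp' ⊢
    by_cases cl : l ≤ N
    · rw [if_pos cl]
      rw [if_pos (by omega)] at hi
      obtain ⟨b, hb, rfl⟩ := hi
      refine ⟨b, ?_, rfl⟩
      split_ifs at hp' with cp
      · obtain ⟨b', hb', e⟩ := hp'
        cases e
        exact h2 b i l p hil hlp cp hb hb'
      · obtain ⟨a, rfl⟩ := key b hp'
        exact h2 _ i l N hil cl le_rfl hb (hxS a)
    · rw [if_neg cl]
      rwa [if_neg (by omega)] at hp'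
  · intro i hi
    dsimp only
    split_ifs with c
    · rw [Set.ncard_image_of_injective _ Sum.inl_injective]
      exact h3 i c
    · rw [← Set.image_univ]
      refine (Set.ncard_image_le Set.finite_univ).trans ?_
      rwa [Set.ncard_univ, Nat.card_coe_set_eq]
  · intro i hi
    dsimp only
    by_cases c : i + 1 ≤ N
    · rw [if_pos c, if_pos (by omega), ← Set.image_inter Sum.inl_injective,
        Set.ncard_image_of_injective _ Sum.inl_injective]
      exact h4 i c
    · rw [if_neg c, if_pos (by omega)]
      have sub : (Sum.inl '' S i ∩ Set.range (newx x I') :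
          Set (P.carrier ⊕ ↥(I' \ I))) ⊆ (fun a => Sum.inl (x a)) '' Set.univ := by
        rintro _ ⟨⟨b, _, rfl⟩, hb⟩
        obtain ⟨a, rfl⟩ := key b hb
        exact ⟨a, trivial, rfl⟩
      refine (Set.ncard_le_ncard sub (Set.toFinite _)).trans ?_
      refine (Set.ncard_image_le Set.finite_univ).trans ?_
      rwa [Set.ncard_univ, Nat.card_coe_set_eq]
  · rintro s u (⟨t, ht, rfl⟩ | ⟨t, ht, hA, rfl⟩)
    · exact hh s t ht
    · simp only [hx']
      exact hA
  · intro a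
    dsimp only
    rw [if_neg (by omega)]
    exact ⟨a, rfl⟩
  · intro s t ht hA
    exact Or.inr ⟨t, ht, hA, rfl⟩

/-- Structure on the empty set with the nullary relations of `A`. -/
@[reducible] def emptyS {σ : Type} {ar : σ → ℕ} (A : Struct σ ar) : Struct σ ar where
  carrier := Empty
  rel s := {u | (fun i => (u i).elim) ∈ A.rel s}

theorem empty_decomp {σ : Type} {ar : σ → ℕ} (A : Struct σ ar) (j k : ℕ) :
    NDecomp (emptyS A) 0 j k (fun _ => ∅) := by
  refine ⟨fun s t _ => ⟨0, le_rfl, fun m => (t m).elim⟩, fun a => a.elim, ?_, ?_⟩ <;> simp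

theorem empty_hom {σ : Type} {ar : σ → ℕ} (A : Struct σ ar) :
    Struct.IsHom (emptyS A) A (fun a => a.elim) := fun _ _ h => h

theorem win {σ : Type} {ar : σ → ℕ} (A B : Struct σ ar) (j k : ℕ)
    (hyp : ∀ (P : Struct σ ar) (N : ℕ) (S : ℕ → Set P.carrier), Finite P.carrier →
      NDecomp P N j k S → P.HomTo A → P.HomTo B) : HasWinStrategy A B j k := by
  refine ⟨fun I => {T | I.Finite ∧ I.ncard ≤ k ∧ ∃ P x, Appr A j k I P x ∧
    T = {f | ∃ g, Struct.IsHom P B g ∧ f = fun a => g (x a)}}, ?_, ?_, ?_, ?_, ?_⟩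
  · refine ⟨∅, _, Set.finite_empty, by simp, emptyS A, fun a => a.2.elim, ⟨?_, 0, fun _ => ∅,
      _, empty_decomp A j k, empty_hom A, fun a => a.2.elim, fun a => a.2.elim, ?_⟩, rfl⟩
    · exact (inferInstance : Finite Empty)
    · intro s t ht hA
      change (fun i => _) ∈ A.rel s
      convert hA using 1
      exact funext fun i => (ht i).elim
  · rintro I T ⟨h1, h2, _⟩
    exact ⟨h1, h2⟩
  · rintro I T ⟨h1, h2, P, x, ⟨hf, N, S, h, hD, hh, hx, hxS, hp⟩, rfl⟩
    constructor
    · obtain ⟨g, hg⟩ := hyp P N S hf hD ⟨h, hh⟩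
      exact ⟨_, g, hg, rfl⟩
    · rintro f ⟨g, hg, rfl⟩ s t ht hA
      exact hg s _ (hp s t ht hA)
  · rintro I T ⟨h1, h2, P, x, ⟨hf, N, S, h, hD, hh, hx, hxS, hp⟩, rfl⟩ I' hs
    refine ⟨h1.subset hs, (Set.ncard_le_ncard hs h1).trans h2, P, fun a => x ⟨a.1, hs a.2⟩,
      ⟨hf, N, S, h, hD, hh, fun a => hx _, fun a => hxS _, fun s t ht hA => hp s t _ hA⟩, ?_⟩
    ext f
    constructor
    · rintro ⟨_, ⟨g, hg, rfl⟩, rfl⟩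
      exact ⟨g, hg, rfl⟩
    · rintro ⟨g, hg, rfl⟩
      exact ⟨_, ⟨g, hg, rfl⟩, rfl⟩
  · rintro I T ⟨h1, h2, P, x, hP, rfl⟩ hj I' hs hI' hk
    refine ⟨_, ⟨hI', hk, _, _, glue_appr hP h1 hj hI' hk, rfl⟩, ?_⟩
    rintro _ ⟨_, ⟨g, hg, rfl⟩, rfl⟩
    refine ⟨fun p => g (Sum.inl p), fun s t ht => hg s _ (Or.inl ⟨t, ht, rfl⟩), ?_⟩
    funext a
    simp only [resFun, newx, a.2, dif_pos]

theorem combine {σ : Type} {ar : σ → ℕ} (A : Struct σ ar) (j k : ℕ) (L : List (Struct σ ar))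
    (hL : ∀ B ∈ L, ∃ (P : Struct σ ar) (N : ℕ) (S : ℕ → Set P.carrier), Finite P.carrier ∧
      NDecomp P N j k S ∧ P.HomTo A ∧ ¬ P.HomTo B) :
    ∃ (P : Struct σ ar) (N : ℕ) (S : ℕ → Set P.carrier), Finite P.carrier ∧
      NDecomp P N j k S ∧ P.HomTo A ∧ ∀ B ∈ L, ¬ P.HomTo B := by
  induction L with
  | nil =>
    exact ⟨emptyS A, 0, _, (inferInstance : Finite Empty), empty_decomp A j k,
      ⟨_, empty_hom A⟩, by simp⟩
  | cons B L ih =>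
    obtain ⟨P, N, S, hf, hD, ⟨h, hh⟩, hB⟩ := hL B (by simp)
    obtain ⟨Q, M, R, hf', hD', ⟨h', hh'⟩, hB'⟩ := ih fun B hB => hL B (by simp [hB])
    refine ⟨dsum P Q, _, _, (inferInstance : Finite (P.carrier ⊕ Q.carrier)),
      dsum_decomp hD hD', ⟨Sum.elim h h', ?_⟩, ?_⟩
    · rintro s u (⟨t, ht, rfl⟩ | ⟨t, ht, rfl⟩)
      · exact hh s t ht
      · exact hh' s t ht
    · rintro B' hB'' ⟨g, hg⟩
      rcases List.mem_cons.1 hB'' with rfl | hm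
      · exact hB ⟨fun p => g (Sum.inl p), fun s t ht => hg s _ (Or.inl ⟨t, ht, rfl⟩)⟩
      · exact hB' B' hm ⟨fun p => g (Sum.inr p), fun s t ht => hg s _ (Or.inr ⟨t, ht, rfl⟩)⟩

/-- if the complement of `C` is the ideal generated by finitely many
structures `B_1,…,B_m`, and `C` is preserved by the `(j,k)`-pebble-relation game,
then `¬C` has an obstruction set all of whose members have pathwidth at most `(j,k)`. -/
theorem stmt1 {σ : Type} {ar : σ → ℕ} [Finite σ] (j k : ℕ) (hjk : j ≤ k)
    (C : Set (Struct σ ar)) (m : ℕ) (Bs : Fin m → Struct σ ar)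
    (hBfin : ∀ i, Finite (Bs i).carrier)
    (hgen : ∀ A : Struct σ ar, Finite A.carrier →
      (A ∉ C ↔ ∃ i, Struct.HomTo A (Bs i)))
    (hclosed : ∀ A B : Struct σ ar, Finite A.carrier → Finite B.carrier →
      A ∈ C → HasWinStrategy A B j k → B ∈ C) :
    ∃ O : Set (Struct σ ar),
      (∀ P ∈ O, Finite P.carrier ∧ Struct.PathwidthLE P j k) ∧
      (∀ A : Struct σ ar, Finite A.carrier →
        (A ∉ C ↔ ∀ P ∈ O, ¬ Struct.HomTo P A)) := by
  refine ⟨{P | Finite P.carrier ∧ Struct.PathwidthLE P j k ∧ P ∈ C},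
    fun P hP => ⟨hP.1, hP.2.1⟩, fun A hA => ⟨?_, ?_⟩⟩
  · rintro hAC P ⟨hf, _, hPC⟩ ⟨h, hh⟩
    obtain ⟨i, g, hg⟩ := (hgen A hA).1 hAC
    exact (hgen P hf).2 ⟨i, fun p => g (h p), fun s t ht => hg s _ (hh s t ht)⟩ hPC
  · intro hO hAC
    obtain ⟨P, N, S, hf, hD, hPA, hPB⟩ := combine A j k (List.ofFn Bs) (by
      intro B hB
      obtain ⟨i, rfl⟩ := (List.mem_ofFn' _ _).1 hB
      by_contra hno
      refine (hgen (Bs i) (hBfin i)).2 ⟨i, id, fun s t ht => ht⟩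
        (hclosed A (Bs i) hA (hBfin i) hAC (win A (Bs i) j k ?_))
      intro P N S hf hD hPA
      by_contra hPB
      exact hno ⟨P, N, S, hf, hD, hPA, hPB⟩)
    refine hO P ⟨hf, hD.pw, ?_⟩ hPA
    by_contra hPC
    obtain ⟨i, hi⟩ := (hgen P hf).1 hPC
    exact hPB (Bs i) ((List.mem_ofFn' _ _).2 ⟨i, rfl⟩) hi
end

section
/- Let 0 ≤ j ≤ k be non-negative integers and let A and B be τ-structures. The Duplicator has a winning strategy for the (j,k)-pebble-relation game on A and B if and only if the Duplicator has a strict winning strategy for the (j,k)-pebble-relation game on A and B. -/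
/-- `H` is a strict winning strategy: like a winning strategy, but with the
strict `(j,k)`-forth property (d'). -/
def IsStrictWinning {σ : Type} {ar : σ → ℕ} (A B : Struct σ ar) (j k : ℕ)
    (H : ∀ I : Set A.carrier, Set (Set (↥I → B.carrier))) : Prop :=
  (∃ I, ∃ T, T ∈ H I) ∧
  (∀ I, ∀ T ∈ H I, I.Finite ∧ I.ncard ≤ k) ∧
  (∀ I, ∀ T ∈ H I, T.Nonempty ∧ ∀ f ∈ T, Struct.IsPHom A B I f) ∧
  (∀ I, ∀ T ∈ H I, ∀ I' : Set A.carrier, ∀ h : I' ⊆ I, resRel h T ∈ H I') ∧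
  (∀ I, ∀ T ∈ H I, I.ncard ≤ j → ∀ I' : Set A.carrier, ∀ h : I ⊆ I',
    I'.Finite → I'.ncard ≤ k →
      {f : ↥I' → B.carrier | Struct.IsPHom A B I' f ∧ resFun h f ∈ T} ∈ H I')

/-- the Duplicator has a winning strategy for the
`(j,k)`-pebble-relation game on `A` and `B` iff it has a strict one. -/
theorem stmt4 {σ : Type} {ar : σ → ℕ} [Finite σ] (j k : ℕ) (hjk : j ≤ k)
    (A B : Struct σ ar) :
    (∃ H, IsWinning A B j k H) ↔ (∃ H, IsStrictWinning A B j k H) := by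
  constructor
  · rintro ⟨H, ⟨I₀, T₀, h₀⟩, hb, hn, hr, hf⟩
    refine ⟨fun I => {T | (∀ f ∈ T, Struct.IsPHom A B I f) ∧ ∃ T0 ∈ H I, T0 ⊆ T},
      ⟨I₀, T₀, (hn I₀ T₀ h₀).2, T₀, h₀, subset_rfl⟩, ?_, ?_, ?_, ?_⟩
    · rintro I T ⟨_, T0, h0, _⟩
      exact hb I T0 h0
    · rintro I T ⟨hT, T0, h0, hs⟩
      exact ⟨(hn I T0 h0).1.mono hs, hT⟩
    · rintro I T ⟨hT, T0, h0, hs⟩ I' h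
      refine ⟨?_, resRel h T0, hr I T0 h0 I' h, Set.image_mono hs⟩
      rintro _ ⟨f, hfT, rfl⟩ s t ht hA
      exact hT f hfT s t (fun i => h (ht i)) hA
    · rintro I T ⟨hT, T0, h0, hs⟩ hj I' h hfin hk
      obtain ⟨T', hT', hsub⟩ := hf I T0 h0 hj I' h hfin hk
      refine ⟨fun f hf => hf.1, T', hT', fun f hfT => ?_⟩
      exact ⟨(hn I' T' hT').2 f hfT, hs (hsub ⟨f, hfT, rfl⟩)⟩
  · rintro ⟨H, h1, hb, hn, hr, hf⟩
    refine ⟨H, h1, hb, hn, hr, ?_⟩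
    intro I T hT hj I' h hfin hk
    refine ⟨_, hf I T hT hj I' h hfin hk, ?_⟩
    rintro _ ⟨f, hfT, rfl⟩
    exact hfT.2
end

section
/- Let 0 ≤ j ≤ k be non-negative integers and let A and B be τ-structures. The Duplicator has a winning strategy for the (j,k)-pebble-relation game on A and B if and only if the Duplicator has a complete winning strategy for the (j,k)-pebble-relation game on A and B. -/
/-- The relation with domain `I''` obtained by extending functions of `T`
(domain `I' ⊆ I`) to partial homomorphisms on `I` and projecting onto `I''`. -/
def extProj {σ : Type} {ar : σ → ℕ} (A B : Struct σ ar)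
    {I I' I'' : Set A.carrier} (h1 : I' ⊆ I) (h2 : I'' ⊆ I)
    (T : Set (↥I' → B.carrier)) : Set (↥I'' → B.carrier) :=
  {g | ∃ f : ↥I → B.carrier, Struct.IsPHom A B I f ∧ resFun h1 f ∈ T ∧
        g = resFun h2 f}

/-- `H` is a complete winning strategy for the `(j,k)`-pebble-relation game on
`A` and `B`.  (`Set.univ` over `↥(∅ : Set A.carrier) → B.carrier` is exactly the
relation `{λ}` containing only the empty function.) -/
def IsCompleteWinning {σ : Type} {ar : σ → ℕ} (A B : Struct σ ar) (j k : ℕ)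
    (H : ∀ I : Set A.carrier, Set (Set (↥I → B.carrier))) : Prop :=
  (∀ I, ∀ T ∈ H I, I.Finite ∧ I.ncard ≤ j) ∧
  ((Set.univ : Set (↥(∅ : Set A.carrier) → B.carrier)) ∈ H ∅) ∧
  (∀ I : Set A.carrier, (∅ : Set (↥I → B.carrier)) ∉ H I) ∧
  (∀ I : Set A.carrier, I.Finite → I.ncard ≤ k →
    ∀ I' : Set A.carrier, ∀ h1 : I' ⊆ I, ∀ T ∈ H I',
      ∀ I'' : Set A.carrier, ∀ h2 : I'' ⊆ I, I''.ncard ≤ j →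
        extProj A B h1 h2 T ∈ H I'')

/-- the Duplicator has a winning strategy for the
`(j,k)`-pebble-relation game on `A` and `B` iff it has a complete one. -/
theorem stmt5 {σ : Type} {ar : σ → ℕ} [Finite σ] (j k : ℕ) (hjk : j ≤ k)
    (A B : Struct σ ar) :
    (∃ H, IsWinning A B j k H) ↔ (∃ H, IsCompleteWinning A B j k H) := by
  constructor
  · rintro ⟨H, ⟨I0, T0, hT0⟩, hsz, hne, hres, hext⟩
    refine ⟨fun I => {T | I.Finite ∧ I.ncard ≤ j ∧ ∃ T0 ∈ H I, T0 ⊆ T}, ?_, ?_, ?_, ?_⟩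
    · rintro I T ⟨h1, h2, _⟩
      exact ⟨h1, h2⟩
    · exact ⟨Set.finite_empty, by simp, _, hres I0 T0 hT0 ∅ (Set.empty_subset _),
        Set.subset_univ _⟩
    · rintro I ⟨_, _, T, hT, hsub⟩
      obtain ⟨f, hf⟩ := (hne I T hT).1
      exact hsub hf
    · rintro I hIf hIk I' h1 T ⟨_, hI'j, T1, hT1, hsub⟩ I'' h2 hI''
      obtain ⟨T2, hT2, hs2⟩ := hext I' T1 hT1 hI'j I h1 hIf hIk
      refine ⟨hIf.subset h2, hI'', _, hres I T2 hT2 I'' h2, ?_⟩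
      rintro g ⟨f, hf, rfl⟩
      exact ⟨f, (hne I T2 hT2).2 f hf, hsub (hs2 ⟨f, hf, rfl⟩), rfl⟩
  · rintro ⟨H, hsz, huniv, hemp, hcl⟩
    refine ⟨fun I'' => {T | ∃ (I I' : Set A.carrier) (h1 : I' ⊆ I) (h2 : I'' ⊆ I),
      I.Finite ∧ I.ncard ≤ k ∧ ∃ T0 ∈ H I', T = extProj A B h1 h2 T0}, ?_, ?_, ?_, ?_, ?_⟩
    · exact ⟨∅, _, ∅, ∅, subset_rfl, subset_rfl, Set.finite_empty, by simp, _, huniv, rfl⟩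
    · rintro I'' T ⟨I, I', h1, h2, hf, hk, T0, hT0, rfl⟩
      exact ⟨hf.subset h2, (Set.ncard_le_ncard h2 hf).trans hk⟩
    · rintro I'' T ⟨I, I', h1, h2, hf, hk, T0, hT0, rfl⟩
      constructor
      · have h := hcl I hf hk I' h1 T0 hT0 ∅ (Set.empty_subset _) (by simp)
        rcases Set.eq_empty_or_nonempty (extProj A B h1 (Set.empty_subset I) T0) with he | he
        · rw [he] at h
          exact absurd h (hemp ∅)
        · obtain ⟨_, f, hf1, hf2, _⟩ := he
          exact ⟨_, f, hf1, hf2, rfl⟩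
      · rintro _ ⟨f, hf1, hf2, rfl⟩ s t ht hts
        exact hf1 s t (fun i => h2 (ht i)) hts
    · rintro I'' T ⟨I, I', h1, h2, hf, hk, T0, hT0, rfl⟩ J hJ
      refine ⟨I, I', h1, hJ.trans h2, hf, hk, T0, hT0, ?_⟩
      ext g
      constructor
      · rintro ⟨_, ⟨f, hf1, hf2, rfl⟩, rfl⟩
        exact ⟨f, hf1, hf2, rfl⟩
      · rintro ⟨f, hf1, hf2, rfl⟩
        exact ⟨_, ⟨f, hf1, hf2, rfl⟩, rfl⟩
    · rintro I'' T ⟨I, I', h1, h2, hf, hk, T0, hT0, rfl⟩ hj J hJ hJf hJk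
      refine ⟨_, ⟨J, I'', hJ, subset_rfl, hJf, hJk, _,
        hcl I hf hk I' h1 T0 hT0 I'' h2 hj, rfl⟩, ?_⟩
      rintro _ ⟨_, ⟨f, hf1, hf2, rfl⟩, rfl⟩
      exact hf2
end

section
/- Let 0 ≤ j ≤ k be non-negative integers and let A and B be τ-structures. The Duplicator has a winning strategy for the (j,k)-pebble-relation game on A and B if and only if the Duplicator has a supercomplete winning strategy for the (j,k)-pebble-relation game on A and B. -/
/-- `H` is a supercomplete winning strategy: a complete winning strategy closed
upwards under inclusion of relations with the same domain. -/
def IsSupercompleteWinning {σ : Type} {ar : σ → ℕ} (A B : Struct σ ar) (j k : ℕ)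
    (H : ∀ I : Set A.carrier, Set (Set (↥I → B.carrier))) : Prop :=
  IsCompleteWinning A B j k H ∧
  (∀ I : Set A.carrier, ∀ T ∈ H I, ∀ T' : Set (↥I → B.carrier), T ⊆ T' → T' ∈ H I)

/-- the Duplicator has a winning strategy for the
`(j,k)`-pebble-relation game on `A` and `B` iff it has a supercomplete one. -/
theorem stmt6 {σ : Type} {ar : σ → ℕ} [Finite σ] (j k : ℕ) (hjk : j ≤ k)
    (A B : Struct σ ar) :
    (∃ H, IsWinning A B j k H) ↔ (∃ H, IsSupercompleteWinning A B j k H) := by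
  constructor
  · rintro ⟨H, ⟨I0, T0, hT0⟩, hfin, hhom, hres, hext⟩
    refine ⟨fun I => {T | I.Finite ∧ I.ncard ≤ j ∧ ∃ T0 ∈ H I, T0 ⊆ T}, ⟨?_, ?_, ?_, ?_⟩, ?_⟩
    · rintro I T ⟨h1, h2, -⟩
      exact ⟨h1, h2⟩
    · exact ⟨Set.finite_empty, by simp, _, hres I0 T0 hT0 ∅ (Set.empty_subset _),
        Set.subset_univ _⟩
    · rintro I ⟨-, -, T, hT, hs⟩
      obtain ⟨f, hf⟩ := (hhom I T hT).1
      exact hs hf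
    · rintro I hI hIk I' h1 T ⟨-, hj, T1, hT1, hs⟩ I'' h2 hj2
      obtain ⟨T', hT', hsub⟩ := hext I' T1 hT1 hj I h1 hI hIk
      refine ⟨hI.subset h2, hj2, _, hres I T' hT' I'' h2, ?_⟩
      rintro g ⟨f, hf, rfl⟩
      exact ⟨f, (hhom I T' hT').2 f hf, hs (hsub ⟨f, hf, rfl⟩), rfl⟩
    · rintro I T ⟨h1, h2, T1, hT1, hs⟩ T' hTT'
      exact ⟨h1, h2, T1, hT1, hs.trans hTT'⟩
  · rintro ⟨H, ⟨hfin, huniv, hne, hc⟩, -⟩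
    let W : ∀ I : Set A.carrier, Set (Set (↥I → B.carrier)) := fun I =>
      {T | I.Finite ∧ I.ncard ≤ k ∧ (T.Nonempty ∧ ∀ f ∈ T, Struct.IsPHom A B I f) ∧
        ∀ I' : Set A.carrier, ∀ h : I' ⊆ I, I'.ncard ≤ j → resRel h T ∈ H I'}
    have key : ∀ I : Set A.carrier, ∀ T ∈ H I, ∀ I' : Set A.carrier, ∀ h : I ⊆ I',
        I'.Finite → I'.ncard ≤ k →
        {f : ↥I' → B.carrier | Struct.IsPHom A B I' f ∧ resFun h f ∈ T} ∈ W I' := by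
      intro I T hT I' h hf hk
      have hp : ∀ I'' : Set A.carrier, ∀ h' : I'' ⊆ I', I''.ncard ≤ j →
          resRel h' {f : ↥I' → B.carrier | Struct.IsPHom A B I' f ∧ resFun h f ∈ T}
            ∈ H I'' := by
        intro I'' h' hj
        have h3 := hc I' hf hk I h T hT I'' h' hj
        convert h3 using 1
        ext g
        constructor
        · rintro ⟨f, ⟨a, b⟩, rfl⟩
          exact ⟨f, a, b, rfl⟩
        · rintro ⟨f, a, b, rfl⟩
          exact ⟨f, ⟨a, b⟩, rfl⟩
      refine ⟨hf, hk, ⟨?_, fun f hf => hf.1⟩, hp⟩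
      have h0 := hp ∅ (Set.empty_subset _) (by simp)
      rw [Set.nonempty_iff_ne_empty]
      intro he
      rw [he] at h0
      apply hne ∅
      simpa [resRel] using h0
    refine ⟨W, ⟨∅, _, key ∅ _ huniv ∅ subset_rfl Set.finite_empty (by simp)⟩, ?_, ?_, ?_, ?_⟩
    · rintro I T ⟨h1, h2, -⟩
      exact ⟨h1, h2⟩
    · rintro I T ⟨-, -, h, -⟩
      exact h
    · rintro I T ⟨h1, h2, ⟨h3, h4⟩, h5⟩ I' h
      refine ⟨h1.subset h, (Set.ncard_le_ncard h h1).trans h2, ⟨h3.image _, ?_⟩, ?_⟩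
      · rintro _ ⟨f, hf, rfl⟩ s t ht hts
        exact h4 f hf s t (fun i => h (ht i)) hts
      · intro I'' h' hj
        have h6 := h5 I'' (h'.trans h) hj
        convert h6 using 1
        ext g
        constructor
        · rintro ⟨_, ⟨f, hf, rfl⟩, rfl⟩
          exact ⟨f, hf, rfl⟩
        · rintro ⟨f, hf, rfl⟩
          exact ⟨_, ⟨f, hf, rfl⟩, rfl⟩
    · rintro I T ⟨h1, h2, h3, h5⟩ hj I' h hf hk
      have hT : T ∈ H I := by
        have h6 := h5 I subset_rfl hj
        convert h6 using 1
        exact (Set.image_id T).symm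
      refine ⟨_, key I T hT I' h hf hk, ?_⟩
      rintro _ ⟨f, hf, rfl⟩
      exact hf.2
end

section
/- Every implicational τ-structure B (a finite structure all of whose relations are binary and implicational) has (2,3)-path duality: for every finite τ-structure A that does not homomorphically map to B, there exists a finite τ-structure P of pathwidth at most (2,3) such that P homomorphically maps to A but P does not homomorphically map to B. -/
/-- A relational structure all of whose relations are binary. -/
structure BinStruct (σ : Type) where
  carrier : Type
  rel : σ → Set (carrier × carrier)

namespace BinStruct

variable {σ : Type}

/-- `h` is a homomorphism from `A` to `B`. -/
def IsHom (A B : BinStruct σ) (h : A.carrier → B.carrier) : Prop :=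
  ∀ s, ∀ p ∈ A.rel s, (h p.1, h p.2) ∈ B.rel s

/-- `A` homomorphically maps to `B`. -/
def HomTo (A B : BinStruct σ) : Prop := ∃ h, IsHom A B h

/-- `S_1,…,S_n` is a path-decomposition of `A`. -/
def IsPathDecomp (A : BinStruct σ) {n : ℕ} (S : Fin n → Set A.carrier) : Prop :=
  (∀ s, ∀ p ∈ A.rel s, ∃ i, p.1 ∈ S i ∧ p.2 ∈ S i) ∧
  (∀ a : A.carrier, ∀ i l p : Fin n, i ≤ l → l ≤ p → a ∈ S i → a ∈ S p → a ∈ S l)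

/-- `A` has pathwidth at most `(j,k)`. -/
def PathwidthLE (A : BinStruct σ) (j k : ℕ) : Prop :=
  ∃ (n : ℕ) (S : Fin n → Set A.carrier),
    IsPathDecomp A S ∧
    (∀ i, (S i).Finite ∧ (S i).ncard ≤ k) ∧
    (∀ i : Fin n, ∀ h : (i : ℕ) + 1 < n, (S i ∩ S ⟨(i : ℕ) + 1, h⟩).ncard ≤ j)

end BinStruct

/-- A binary relation is implicational (0/1/all). -/
def Implicational {α : Type} (R : Set (α × α)) : Prop :=
  (∃ B C : Set α, R = B ×ˢ C) ∨
  (∃ (B : Set α) (f : α → α), Set.InjOn f B ∧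
      R = {p | p.1 ∈ B ∧ p.2 = f p.1}) ∨
  (∃ (B C : Set α) (b c : α), b ∈ B ∧ c ∈ C ∧
      R = ({b} ×ˢ C) ∪ (B ×ˢ {c}))

namespace BinStruct

variable {σ : Type}

/-- A constraint from `u` to `v`. -/
def Edge (A B : BinStruct σ) (u v : A.carrier) (R : B.carrier → B.carrier → Prop) : Prop :=
  ∃ s, ((u, v) ∈ A.rel s ∧ R = fun y z => (y, z) ∈ B.rel s) ∨
    ((v, u) ∈ A.rel s ∧ R = fun y z => (z, y) ∈ B.rel s)

def Reach (A B : BinStruct σ) (a b : A.carrier) (T : B.carrier → B.carrier → Prop) : Prop :=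
  ∃ (P : BinStruct σ) (φ : P.carrier → A.carrier) (n : ℕ) (S : ℕ → Set P.carrier)
    (p q : P.carrier), Finite P.carrier ∧ IsHom P A φ ∧
    (∀ s, ∀ e ∈ P.rel s, ∃ i ≤ n, e.1 ∈ S i ∧ e.2 ∈ S i) ∧
    (∀ c i l m, i ≤ l → l ≤ m → m ≤ n → c ∈ S i → c ∈ S m → c ∈ S l) ∧
    (∀ i ≤ n, (S i).ncard ≤ 3) ∧
    (∀ i < n, (S i ∩ S (i+1)).ncard ≤ 2) ∧
    p ∈ S n ∧ q ∈ S n ∧ φ p = a ∧ φ q = b ∧ ∀ h, IsHom P B h → T (h p) (h q)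

theorem ncard_pair_le2 {α : Type} (a b : α) : ({a, b} : Set α).ncard ≤ 2 :=
  (Set.ncard_insert_le _ _).trans (by simp)

theorem reach_start (A B : BinStruct σ) (a : A.carrier) :
    Reach A B a a (fun x y => y = x) := by
  refine ⟨⟨Unit, fun _ => ∅⟩, fun _ => a, 0, fun _ => Set.univ, (), (), ?_, ?_, ?_, ?_, ?_, ?_,
    trivial, trivial, rfl, rfl, fun _ _ => rfl⟩
  · exact inferInstanceAs (Finite Unit)
  · intro s p hp; exact hp.elim
  · intro s p hp; exact hp.elim
  · intros; trivial
  · intro i _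
    have : (Set.univ : Set Unit).ncard = 1 := by simp
    exact this.le.trans (by norm_num)
  · intro i hi; omega

theorem Reach.ret {A B : BinStruct σ} {a b : A.carrier} {T T' : B.carrier → B.carrier → Prop}
    (H : Reach A B a b T) (hT : ∀ x y, T x y → T' x x) : Reach A B a a T' := by
  obtain ⟨P, φ, n, S, p, q, h1, h2, h3, h4, h5, h6, h7, h8, h9, h10, h11⟩ := H
  exact ⟨P, φ, n, S, p, p, h1, h2, h3, h4, h5, h6, h7, h7, h9, h9, fun h hh => hT _ _ (h11 h hh)⟩

theorem Reach.mono {A B : BinStruct σ} {a b : A.carrier} {T T' : B.carrier → B.carrier → Prop}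
    (H : Reach A B a b T) (hT : ∀ x y, T x y → T' x y) : Reach A B a b T' := by
  obtain ⟨P, φ, n, S, p, q, h1, h2, h3, h4, h5, h6, h7, h8, h9, h10, h11⟩ := H
  exact ⟨P, φ, n, S, p, q, h1, h2, h3, h4, h5, h6, h7, h8, h9, h10, fun h hh => hT _ _ (h11 h hh)⟩

theorem Reach.move {A B : BinStruct σ} {a b : A.carrier} {T T' : B.carrier → B.carrier → Prop}
    (H : Reach A B a b T) (c : A.carrier)
    (hT : ∀ x y z, T x y → (∀ R, Edge A B a b R → R x y) → (∀ R, Edge A B b c R → R y z) →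
      T' x z) : Reach A B a c T' := by
  obtain ⟨P, φ, n, S, p, q, h1, h2, h3, h4, h5, h6, h7, h8, h9, h10, h11⟩ := H
  let φ' : Option P.carrier → A.carrier := fun o => o.elim c φ
  let N : Set (Option P.carrier) := {some p, some q, none}
  let P' : BinStruct σ := ⟨Option P.carrier, fun s => {e | (φ' e.1, φ' e.2) ∈ A.rel s ∧
    ((∃ e' ∈ P.rel s, e = (some e'.1, some e'.2)) ∨ (e.1 ∈ N ∧ e.2 ∈ N))}⟩
  let S' : ℕ → Set (Option P.carrier) := fun i => if i ≤ n then some '' S i else N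
  have hS1 : ∀ i, i ≤ n → S' i = some '' S i := fun i hi => if_pos hi
  have hS2 : S' (n+1) = N := if_neg (by omega)
  have hpN : some p ∈ N := by simp [N]
  have hqN : some q ∈ N := by simp [N]
  have hnN : none ∈ N := by simp [N]
  have hfin : Finite (Option P.carrier) := inferInstance
  refine ⟨P', φ', n+1, S', some p, none, hfin, ?_, ?_, ?_, ?_, ?_, ?_, ?_, h9, rfl, ?_⟩
  · intro s e he; exact he.1
  · rintro s e ⟨_, ⟨e', he', rfl⟩ | he⟩
    · obtain ⟨i, hi, hi1, hi2⟩ := h3 s e' he'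
      refine ⟨i, by omega, ?_⟩
      rw [hS1 i hi]
      exact ⟨⟨_, hi1, rfl⟩, ⟨_, hi2, rfl⟩⟩
    · exact ⟨n+1, le_rfl, by rw [hS2]; exact he⟩
  · intro d i l m hil hlm hm hi hm'
    rcases Nat.lt_or_ge l (n+1) with hl | hl
    · rw [hS1 l (by omega)]
      rw [hS1 i (by omega)] at hi
      obtain ⟨d, hd, rfl⟩ := hi
      refine ⟨d, ?_, rfl⟩
      rcases Nat.lt_or_ge m (n+1) with hmn | hmn
      · rw [hS1 m (by omega)] at hm'
        obtain ⟨d', hd', he⟩ := hm'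
        cases he
        exact h4 _ i l m hil hlm (by omega) hd hd'
      · have : m = n+1 := by omega
        subst this
        rw [hS2] at hm'
        have : d ∈ S n := by
          rcases hm' with he | he | he
          · cases he; exact h7
          · cases he; exact h8
          · cases he
        exact h4 _ i l n hil (by omega) le_rfl hd this
    · have : l = m := by omega
      subst this; exact hm'
  · intro i hi
    rcases Nat.lt_or_ge i (n+1) with hl | hl
    · rw [hS1 i (by omega)]
      exact (Set.ncard_image_le (Set.toFinite _)).trans (h5 i (by omega))
    · have : i = n+1 := by omega
      subst this
      rw [hS2]
      exact Set.ncard_insert_le _ _ |>.trans (Nat.succ_le_succ (ncard_pair_le2 _ _))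
  · intro i hi
    rcases Nat.lt_or_ge i n with hl | hl
    · rw [hS1 i (by omega), hS1 (i+1) (by omega), ← Set.image_inter (Option.some_injective _)]
      exact (Set.ncard_image_le (Set.toFinite _)).trans (h6 i hl)
    · have : i = n := by omega
      subst this
      rw [hS2, hS1 i le_rfl]
      have hsub : some '' S i ∩ N ⊆ {some p, some q} := by
        rintro _ ⟨⟨d, hd, rfl⟩, he | he | he⟩
        · exact Or.inl he
        · exact Or.inr he
        · cases he
      exact (Set.ncard_le_ncard hsub (Set.toFinite _)).trans (ncard_pair_le2 _ _)
  · rw [hS2]; exact hpN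
  · rw [hS2]; exact hnN
  · intro h hh
    have key : ∀ o ∈ N, ∀ o' ∈ N, ∀ R, Edge A B (φ' o) (φ' o') R → R (h o) (h o') := by
      rintro o ho o' ho' R ⟨s, ⟨hs, rfl⟩ | ⟨hs, rfl⟩⟩
      · exact hh s (o, o') ⟨hs, Or.inr ⟨ho, ho'⟩⟩
      · exact hh s (o', o) ⟨hs, Or.inr ⟨ho', ho⟩⟩
    have hP : IsHom P B (fun d => h (some d)) := by
      intro s e he
      exact hh s (some e.1, some e.2) ⟨h2 s e he, Or.inl ⟨e, he, rfl⟩⟩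
    subst h9 h10
    exact hT _ _ _ (h11 _ hP) (key _ hpN _ hqN) (key _ hqN _ hnN)

theorem Reach.finish {A B : BinStruct σ} {a b : A.carrier}
    (H : Reach A B a b (fun _ _ => False)) :
    ∃ P : BinStruct σ, Finite P.carrier ∧ PathwidthLE P 2 3 ∧ HomTo P A ∧ ¬ HomTo P B := by
  obtain ⟨P, φ, n, S, p, q, h1, h2, h3, h4, h5, h6, h7, h8, h9, h10, h11⟩ := H
  refine ⟨P, h1, ⟨n+1, fun i => S i, ⟨?_, ?_⟩, ?_, ?_⟩, ⟨φ, h2⟩, fun ⟨h, hh⟩ => h11 h hh⟩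
  · intro s e he
    obtain ⟨i, hi, hi'⟩ := h3 s e he
    exact ⟨⟨i, by omega⟩, hi'⟩
  · intro d i l m hil hlm
    exact h4 d i l m hil hlm (by omega)
  · intro i; exact ⟨Set.toFinite _, h5 i (by omega)⟩
  · intro i hi; exact h6 i (by omega)

/-- Propagation. -/
inductive F (A B : BinStruct σ) (a : A.carrier) (x : B.carrier) : A.carrier → B.carrier → Prop
  | base : F A B a x a x
  | step (u v y z R) : F A B a x u y → Edge A B u v R → (∀ z', R y z' → z' = z) →
      F A B a x v z

def D (A B : BinStruct σ) (v : A.carrier) (z : B.carrier) : Prop :=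
  ∀ w R, Edge A B v w R → ∃ t, R z t

theorem Edge.flip {A B : BinStruct σ} {u v : A.carrier} {R : B.carrier → B.carrier → Prop}
    (H : Edge A B u v R) : Edge A B v u (fun y z => R z y) := by
  obtain ⟨s, ⟨h, rfl⟩ | ⟨h, rfl⟩⟩ := H
  · exact ⟨s, Or.inr ⟨h, rfl⟩⟩
  · exact ⟨s, Or.inl ⟨h, rfl⟩⟩

theorem tri {A B : BinStruct σ} (himp : ∀ s, Implicational (B.rel s))
    {u v : A.carrier} {R : B.carrier → B.carrier → Prop}
    (H : Edge A B u v R) (y : B.carrier) (hy : ∃ t, R y t) :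
    (∀ z, (∃ t, R t z) → R y z) ∨ (∃ z, ∀ z', R y z' → z' = z) := by
  obtain ⟨s, ⟨h, rfl⟩ | ⟨h, rfl⟩⟩ := H
  all_goals
    rcases himp s with ⟨X, Y, e⟩ | ⟨X, f, hf, e⟩ | ⟨X, Y, b, c, hb, hc, e⟩
    all_goals
      simp only [e] at hy ⊢
  · left; rintro z ⟨t, ht⟩; obtain ⟨w, hw⟩ := hy; exact ⟨hw.1, ht.2⟩
  · right; exact ⟨f y, fun z' hz => hz.2⟩
  · by_cases hyb : y = b
    · left; rintro z ⟨t, ht⟩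
      subst hyb
      rcases ht with ht | ht
      · exact Or.inl ⟨rfl, ht.2⟩
      · exact Or.inr ⟨hb, ht.2⟩
    · right; refine ⟨c, fun z' hz => ?_⟩
      rcases hz with hz | hz
      · exact absurd hz.1 hyb
      · exact hz.2
  · left; rintro z ⟨t, ht⟩; obtain ⟨w, hw⟩ := hy; exact ⟨ht.1, hw.2⟩
  · right; obtain ⟨w, hw⟩ := hy
    exact ⟨w, fun z' hz => hf hz.1 hw.1 (hz.2.symm.trans hw.2)⟩
  · by_cases hyb : y = c
    · left; rintro z ⟨t, ht⟩
      subst hyb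
      rcases ht with ht | ht
      · exact Or.inl ⟨ht.1, hc⟩
      · exact Or.inr ⟨ht.1, rfl⟩
    · right; refine ⟨b, fun z' hz => ?_⟩
      rcases hz with hz | hz
      · exact hz.1
      · exact absurd hz.2 hyb

def Bad (A B : BinStruct σ) (a : A.carrier) (x : B.carrier) : Prop :=
  (∃ u y, F A B a x u y ∧ ¬ D A B u y) ∨
  (∃ u y y', F A B a x u y ∧ F A B a x u y' ∧ y ≠ y')

def St (A B : BinStruct σ) (a : A.carrier) (X : Set B.carrier) (x : B.carrier) (b : A.carrier)
    (Q : Set B.carrier) : Prop :=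
  Reach A B a b (fun x' y => x' ∉ X ∧ (x' = x → y ∈ Q))

theorem fwd {A B : BinStruct σ} {a : A.carrier} {X : Set B.carrier} {x : B.carrier}
    (H : Reach A B a a (fun x' y => x' ∉ X ∧ y = x')) {u y} (hF : F A B a x u y) :
    St A B a X x u {y} := by
  induction hF with
  | base => exact H.mono (fun x' y h => ⟨h.1, fun e => h.2.trans e⟩)
  | step u v y z R hu hE hR ih =>
    refine Reach.move ih v ?_
    rintro x' y' z' ⟨h1, h2⟩ - h4
    refine ⟨h1, fun e => ?_⟩
    have := h2 e
    cases this
    exact hR _ (h4 R hE)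

theorem closeup {A B : BinStruct σ} {a b : A.carrier} {X : Set B.carrier} {x : B.carrier}
    (H : St A B a X x b ∅) :
    Reach A B a a (fun x' y => x' ∉ insert x X ∧ y = x') := by
  refine Reach.ret H ?_
  rintro x' y ⟨h1, h2⟩
  refine ⟨?_, rfl⟩
  rintro (e | e)
  · exact h2 e
  · exact h1 e

theorem bwd {A B : BinStruct σ} {a : A.carrier} {X : Set B.carrier} {x : B.carrier}
    {u y} (hF : F A B a x u y) :
    (u = a ∧ y = x) ∨ (St A B a X x u {w | w ≠ y} →
      Reach A B a a (fun x' y => x' ∉ insert x X ∧ y = x')) := by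
  induction hF with
  | base => exact Or.inl ⟨rfl, rfl⟩
  | step u v y z R hu hE hR ih =>
    refine Or.inr fun hS => ?_
    rcases ih with ⟨rfl, rfl⟩ | ih
    · refine closeup (b := v) (Reach.move hS v ?_)
      rintro x' y' z' ⟨h1, h2⟩ h3 -
      refine ⟨h1, ?_⟩
      rintro rfl
      exact h2 rfl (hR _ (h3 R hE))
    · refine ih (Reach.move hS u ?_)
      rintro x' y' z' ⟨h1, h2⟩ - h4
      refine ⟨h1, fun e => ?_⟩
      rintro rfl
      exact h2 e (hR _ (h4 _ hE.flip))

theorem bad_reach {A B : BinStruct σ} {a : A.carrier} {X : Set B.carrier} {x : B.carrier}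
    (H : Reach A B a a (fun x' y => x' ∉ X ∧ y = x')) (hb : Bad A B a x) :
    Reach A B a a (fun x' y => x' ∉ insert x X ∧ y = x') := by
  rcases hb with ⟨u, y, hF, hD⟩ | ⟨u, y, y', hF, hF', hne⟩
  · simp only [D, not_forall] at hD
    obtain ⟨w, R, hE, hn⟩ := hD
    refine closeup (b := w) (Reach.move (fwd H hF) w ?_)
    rintro x' y' z' ⟨h1, h2⟩ - h4
    refine ⟨h1, fun e => hn ⟨z', ?_⟩⟩
    have := h2 e
    cases this
    exact h4 R hE
  · rcases bwd (X := X) hF' with ⟨rfl, rfl⟩ | h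
    · rcases bwd (X := X) hF with ⟨-, h⟩ | h
      · exact absurd h hne
      · refine h ((fwd H hF').mono ?_)
        rintro p q ⟨h1, h2⟩
        exact ⟨h1, fun e => by rw [h2 e]; exact hne.symm⟩
    · refine h ((fwd H hF).mono ?_)
      rintro p q ⟨h1, h2⟩
      exact ⟨h1, fun e => by rw [h2 e]; exact hne⟩

theorem good_hom {A B : BinStruct σ} (himp : ∀ s, Implicational (B.rel s))
    (H : ∀ a, ∃ x, ¬ Bad A B a x) : HomTo A B := by
  choose x hx using H
  have hD : ∀ a u y, F A B a (x a) u y → D A B u y := by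
    intro a u y h
    by_contra hn
    exact hx a (Or.inl ⟨u, y, h, hn⟩)
  have hU : ∀ a u y y', F A B a (x a) u y → F A B a (x a) u y' → y = y' := by
    intro a u y y' h h'
    by_contra hn
    exact hx a (Or.inr ⟨u, y, y', h, h', hn⟩)
  obtain ⟨_, hwf⟩ := exists_wellOrder A.carrier
  have hmin : ∀ v, ∃ a y, F A B a (x a) v y ∧ ∀ b y', F A B b (x b) v y' → a ≤ b := by
    intro v
    obtain ⟨a, ⟨y, hy⟩, hm⟩ := hwf.wf.has_min {a | ∃ y, F A B a (x a) v y} ⟨v, x v, F.base⟩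
    exact ⟨a, y, hy, fun b y' hb => not_lt.1 (hm b ⟨y', hb⟩)⟩
  choose m h hF hm using hmin
  have main : ∀ u v R, Edge A B u v R → m u ≤ m v → R (h u) (h v) := by
    intro u v R hE hle
    have hy := hD _ _ _ (hF u) v R hE
    rcases tri himp hE (h u) hy with hall | ⟨z, hz⟩
    · exact hall _ (hD _ _ _ (hF v) u _ hE.flip)
    · have hFz : F A B (m u) (x (m u)) v z := F.step u v _ z R (hF u) hE hz
      have heq : m u = m v := le_antisymm hle (hm v _ _ hFz)
      rw [heq] at hFz
      have := hU _ _ _ _ hFz (hF v)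
      obtain ⟨t, ht⟩ := hy
      rw [← this, ← hz t ht]
      exact ht
  refine ⟨h, fun s p hp => ?_⟩
  have hE : Edge A B p.1 p.2 (fun y z => (y, z) ∈ B.rel s) := ⟨s, Or.inl ⟨hp, rfl⟩⟩
  rcases le_total (m p.1) (m p.2) with hle | hle
  · exact main _ _ _ hE hle
  · exact main _ _ _ hE.flip hle

end BinStruct

/-- every finite implicational structure `B` has `(2,3)`-path
duality. -/
theorem stmt8 {σ : Type} [Finite σ] (B : BinStruct σ) (hBfin : Finite B.carrier)
    (himp : ∀ s, Implicational (B.rel s)) :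
    ∀ A : BinStruct σ, Finite A.carrier → ¬ BinStruct.HomTo A B →
      ∃ P : BinStruct σ, Finite P.carrier ∧ BinStruct.PathwidthLE P 2 3 ∧
        BinStruct.HomTo P A ∧ ¬ BinStruct.HomTo P B := by
  intro A _ hA
  have : ∃ a, ∀ x, BinStruct.Bad A B a x := by
    by_contra hn
    push Not at hn
    exact hA (BinStruct.good_hom himp hn)
  obtain ⟨a, ha⟩ := this
  have key : ∀ X : Set B.carrier,
      BinStruct.Reach A B a a (fun x' y => x' ∉ X ∧ y = x') := by
    intro X
    induction X, Set.toFinite X using Set.Finite.induction_on with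
    | empty => exact (BinStruct.reach_start A B a).mono (fun x y h => ⟨id, h⟩)
    | insert _ _ ih => exact BinStruct.bad_reach ih (ha _)
  exact ((key Set.univ).mono (fun x y h => h.1 trivial)).finish
end

section
/- Let B be an implicational τ-structure and let A be a finite τ-structure over the same vocabulary (all relation symbols binary), and let G be the conflict graph associated to A and B. Then A homomorphically maps to B if and only if for every a ∈ A there exists some b ∈ B such that there is no directed path in G from the node (a,b) to any node in {(a,b') : b' ∈ B, b' ≠ b} ∪ {□}. -/
/-- The arc relation of the conflict graph associated to an instance `A` and an
implicational structure `B`.  Nodes are pairs `(a,b)` (as `Sum.inl`) together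
with the special node `□` (as `Sum.inr ()`). -/
def ConflictEdge {σ : Type} (A B : BinStruct σ) :
    (A.carrier × B.carrier ⊕ Unit) → (A.carrier × B.carrier ⊕ Unit) → Prop :=
  fun x y =>
    (∃ s a a' b b', (a, a') ∈ A.rel s ∧
      B.rel s ∩ {p | p.1 = b} = {(b, b')} ∧
      x = Sum.inl (a, b) ∧ y = Sum.inl (a', b')) ∨
    (∃ s a a' b b', (a, a') ∈ A.rel s ∧
      B.rel s ∩ {p | p.2 = b'} = {(b, b')} ∧
      x = Sum.inl (a', b') ∧ y = Sum.inl (a, b)) ∨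
    (∃ s a a' b, (a, a') ∈ A.rel s ∧
      B.rel s ∩ {p | p.1 = b} = ∅ ∧
      x = Sum.inl (a, b) ∧ y = Sum.inr ()) ∨
    (∃ s a a' b', (a, a') ∈ A.rel s ∧
      B.rel s ∩ {p | p.2 = b'} = ∅ ∧
      x = Sum.inl (a', b') ∧ y = Sum.inr ())


section helpers
open Relation

lemma row_sing {α : Type} (R : Set (α × α)) (b b' : α) :
    R ∩ {p | p.1 = b} = {(b, b')} ↔ ∀ y, (b, y) ∈ R ↔ y = b' := by
  constructor
  · intro h y
    have := Set.ext_iff.1 h (b, y)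
    simpa using this
  · intro h
    ext ⟨x, y⟩
    simp only [Set.mem_inter_iff, Set.mem_setOf_eq, Set.mem_singleton_iff, Prod.mk.injEq]
    constructor
    · rintro ⟨h1, rfl⟩; exact ⟨rfl, (h y).1 h1⟩
    · rintro ⟨rfl, h1⟩; exact ⟨(h y).2 h1, rfl⟩

lemma col_sing {α : Type} (R : Set (α × α)) (b b' : α) :
    R ∩ {p | p.2 = b'} = {(b, b')} ↔ ∀ x, (x, b') ∈ R ↔ x = b := by
  constructor
  · intro h y
    have := Set.ext_iff.1 h (y, b')
    simpa using this
  · intro h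
    ext ⟨x, y⟩
    simp only [Set.mem_inter_iff, Set.mem_setOf_eq, Set.mem_singleton_iff, Prod.mk.injEq]
    constructor
    · rintro ⟨h1, rfl⟩; exact ⟨(h x).1 h1, rfl⟩
    · rintro ⟨h1, rfl⟩; exact ⟨(h x).2 h1, rfl⟩

lemma row_empty {α : Type} (R : Set (α × α)) (b : α) :
    R ∩ {p | p.1 = b} = ∅ ↔ ∀ y, (b, y) ∉ R := by
  simp [Set.eq_empty_iff_forall_notMem]
  grind

lemma col_empty {α : Type} (R : Set (α × α)) (b : α) :
    R ∩ {p | p.2 = b} = ∅ ↔ ∀ y, (y, b) ∉ R := by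
  simp [Set.eq_empty_iff_forall_notMem]
  grind

lemma imp1 {α : Type} {R : Set (α × α)} (hR : Implicational R) {b b' c : α}
    (h : ∀ y, (b, y) ∈ R ↔ y = b') (hc : c ≠ b') :
    (∀ x, (x, c) ∉ R) ∨ ∃ d, d ≠ b ∧ ∀ x, (x, c) ∈ R ↔ x = d := by
  by_cases hne : ∀ x, (x, c) ∉ R
  · exact Or.inl hne
  right
  push Not at hne
  obtain ⟨d, hd⟩ := hne
  have hbc : (b, c) ∉ R := fun h' => hc ((h c).1 h')
  have hdb : d ≠ b := by rintro rfl; exact hbc hd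
  have hbb := (h b').2 rfl
  refine ⟨d, hdb, fun x => ⟨fun hx => ?_, fun hx => hx ▸ hd⟩⟩
  rcases hR with ⟨P, Q, rfl⟩ | ⟨P, f, hf, rfl⟩ | ⟨P, Q, p, q, hp, hq, rfl⟩
  · exact absurd ⟨hbb.1, hd.2⟩ hbc
  · exact hf hx.1 hd.1 (hx.2.symm.trans hd.2)
  · simp at *
    grind

lemma imp2 {α : Type} {R : Set (α × α)} (hR : Implicational R) {b b' c : α}
    (h : ∀ x, (x, b') ∈ R ↔ x = b) (hc : c ≠ b) :
    (∀ y, (c, y) ∉ R) ∨ ∃ d, d ≠ b' ∧ ∀ y, (c, y) ∈ R ↔ y = d := by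
  by_cases hne : ∀ y, (c, y) ∉ R
  · exact Or.inl hne
  right
  push Not at hne
  obtain ⟨d, hd⟩ := hne
  have hbc : (c, b') ∉ R := fun h' => hc ((h c).1 h')
  have hdb : d ≠ b' := by rintro rfl; exact hbc hd
  have hbb := (h b).2 rfl
  refine ⟨d, hdb, fun x => ⟨fun hx => ?_, fun hx => hx ▸ hd⟩⟩
  rcases hR with ⟨P, Q, rfl⟩ | ⟨P, f, hf, rfl⟩ | ⟨P, Q, p, q, hp, hq, rfl⟩
  · exact absurd ⟨hd.1, hbb.2⟩ hbc
  · exact hx.2.trans hd.2.symm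
  · simp at *
    grind

lemma imp3 {α : Type} {R : Set (α × α)} (hR : Implicational R) {b c : α}
    (h1 : ∃ y, (b, y) ∈ R) (h2 : ∃ x, (x, c) ∈ R)
    (h3 : ∀ b', (∀ y, (b, y) ∈ R ↔ y = b') → c = b') :
    (b, c) ∈ R := by
  obtain ⟨y, hy⟩ := h1
  obtain ⟨x, hx⟩ := h2
  rcases hR with ⟨P, Q, rfl⟩ | ⟨P, f, hf, rfl⟩ | ⟨P, Q, p, q, hp, hq, rfl⟩
  · exact ⟨hy.1, hx.2⟩
  · exact ⟨hy.1, h3 (f b) fun z => ⟨fun h => h.2, fun h => ⟨hy.1, h⟩⟩⟩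
  · by_cases hb : b = p
    · simp at *
      grind
    · have := h3 q (by intro y; simp at *; grind)
      simp at *
      grind

variable {σ : Type} {A B : BinStruct σ}

lemma edge_inr {y} (h : ConflictEdge A B (Sum.inr ()) y) : False := by
  rcases h with h | h | h | h <;> simp at h

lemma edge_contra (himp : ∀ s, Implicational (B.rel s)) {a a' b b' c}
    (h : ConflictEdge A B (Sum.inl (a, b)) (Sum.inl (a', b'))) (hc : c ≠ b') :
    ConflictEdge A B (Sum.inl (a', c)) (Sum.inr ()) ∨
      ∃ d, d ≠ b ∧ ConflictEdge A B (Sum.inl (a', c)) (Sum.inl (a, d)) := by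
  rcases h with ⟨s, x, x', y, y', h1, h2, h3, h4⟩ | ⟨s, x, x', y, y', h1, h2, h3, h4⟩ |
    ⟨_, _, _, _, _, _, _, h⟩ | ⟨_, _, _, _, _, _, _, h⟩
  · simp only [Sum.inl.injEq, Prod.mk.injEq] at h3 h4
    obtain ⟨rfl, rfl⟩ := h3
    obtain ⟨rfl, rfl⟩ := h4
    rcases imp1 (himp s) ((row_sing _ _ _).1 h2) hc with h | ⟨d, hd, h⟩
    · exact Or.inl (Or.inr (Or.inr (Or.inr ⟨s, a, a', c, h1, (col_empty _ _).2 h, rfl, rfl⟩)))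
    · exact Or.inr ⟨d, hd, Or.inr (Or.inl ⟨s, a, a', d, c, h1, (col_sing _ _ _).2 h, rfl, rfl⟩)⟩
  · simp only [Sum.inl.injEq, Prod.mk.injEq] at h3 h4
    obtain ⟨rfl, rfl⟩ := h3
    obtain ⟨rfl, rfl⟩ := h4
    rcases imp2 (himp s) ((col_sing _ _ _).1 h2) hc with h | ⟨d, hd, h⟩
    · exact Or.inl (Or.inr (Or.inr (Or.inl ⟨s, a', a, c, h1, (row_empty _ _).2 h, rfl, rfl⟩)))
    · exact Or.inr ⟨d, hd, Or.inl ⟨s, a', a, c, d, h1, (row_sing _ _ _).2 h, rfl, rfl⟩⟩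
  · cases h
  · cases h

lemma path_contra (himp : ∀ s, Implicational (B.rel s)) {a b} {z}
    (h : ReflTransGen (ConflictEdge A B) (Sum.inl (a, b)) z) :
    ∀ a' b' c, z = Sum.inl (a', b') → c ≠ b' →
    ReflTransGen (ConflictEdge A B) (Sum.inl (a', c)) (Sum.inr ()) ∨
      ∃ d, d ≠ b ∧ ReflTransGen (ConflictEdge A B) (Sum.inl (a', c)) (Sum.inl (a, d)) := by
  induction h with
  | refl =>
    intro a' b' c hz hc
    simp only [Sum.inl.injEq, Prod.mk.injEq] at hz
    obtain ⟨rfl, rfl⟩ := hz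
    exact Or.inr ⟨c, hc, .refl⟩
  | @tail y z h1 h2 ih =>
    rintro a' b' c rfl hc
    rcases y with ⟨x, y⟩ | ⟨⟩
    · rcases edge_contra himp h2 hc with h | ⟨d, hd, h⟩
      · exact Or.inl (.single h)
      · rcases ih x y d rfl hd with h' | ⟨e, he, h'⟩
        · exact Or.inl (.head h h')
        · exact Or.inr ⟨e, he, .head h h'⟩
    · exact (edge_inr h2).elim

def GoodSet (A B : BinStruct σ) (T : Set (A.carrier × B.carrier ⊕ Unit)) : Prop :=
  (∀ x ∈ T, ∀ y, ConflictEdge A B x y → y ∈ T) ∧ Sum.inr () ∉ T ∧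
  ∀ a b b', Sum.inl (a, b) ∈ T → Sum.inl (a, b') ∈ T → b = b'

lemma GoodSet.path {T} (hT : GoodSet A B T) {x y} (hx : x ∈ T)
    (h : ReflTransGen (ConflictEdge A B) x y) : y ∈ T := by
  induction h with
  | refl => exact hx
  | tail _ h ih => exact hT.1 _ ih _ h

lemma exists_good (himp : ∀ s, Implicational (B.rel s))
    (H : ∀ a : A.carrier, ∃ b : B.carrier,
        (∀ b' : B.carrier, b' ≠ b →
          ¬ Relation.ReflTransGen (ConflictEdge A B)
              (Sum.inl (a, b)) (Sum.inl (a, b'))) ∧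
        ¬ Relation.ReflTransGen (ConflictEdge A B)
            (Sum.inl (a, b)) (Sum.inr ())) (F : Finset A.carrier) :
    ∃ T, GoodSet A B T ∧ ∀ a ∈ F, ∃ b, Sum.inl (a, b) ∈ T := by
  classical
  induction F using Finset.induction_on with
  | empty => exact ⟨∅, ⟨by simp, by simp, by simp⟩, by simp⟩
  | insert a F _ ih =>
    obtain ⟨T, hT, hF⟩ := ih
    by_cases ha : ∃ b, Sum.inl (a, b) ∈ T
    · refine ⟨T, hT, fun x hx => ?_⟩
      rcases Finset.mem_insert.1 hx with rfl | hx
      · exact ha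
      · exact hF x hx
    obtain ⟨b, hb1, hb2⟩ := H a
    have key : ∀ x c c', Sum.inl (x, c) ∈ T →
        ReflTransGen (ConflictEdge A B) (Sum.inl (a, b)) (Sum.inl (x, c')) → c = c' := by
      intro x c c' h1 h2
      by_contra hne
      rcases path_contra himp h2 x c' c rfl hne with h | ⟨d, _, h⟩
      · exact hT.2.1 (hT.path h1 h)
      · exact ha ⟨d, hT.path h1 h⟩
    refine ⟨T ∪ {y | ReflTransGen (ConflictEdge A B) (Sum.inl (a, b)) y}, ⟨?_, ?_, ?_⟩, ?_⟩
    · rintro x (hx | hx) y hy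
      · exact Or.inl (hT.1 x hx y hy)
      · exact Or.inr (ReflTransGen.tail hx hy)
    · rintro (h | h)
      · exact hT.2.1 h
      · exact hb2 h
    · rintro x c c' (h | h) (h' | h')
      · exact hT.2.2 x c c' h h'
      · exact key x c c' h h'
      · exact (key x c' c h' h).symm
      · by_contra hne
        rcases path_contra himp h' x c' c rfl hne with h2 | ⟨d, hd, h2⟩
        · exact hb2 (ReflTransGen.trans h h2)
        · exact hb1 d hd (ReflTransGen.trans h h2)
    · intro x hx
      rcases Finset.mem_insert.1 hx with rfl | hx
      · exact ⟨b, Or.inr .refl⟩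
      · obtain ⟨c, hc⟩ := hF x hx
        exact ⟨c, Or.inl hc⟩

lemma hom_good {h : A.carrier → B.carrier} (hh : BinStruct.IsHom A B h) :
    GoodSet A B {z | ∃ a, z = Sum.inl (a, h a)} := by
  refine ⟨?_, by simp, ?_⟩
  · rintro _ ⟨x, rfl⟩ y (⟨s, a, a', b, b', h1, h2, h3, rfl⟩ | ⟨s, a, a', b, b', h1, h2, h3, rfl⟩ |
      ⟨s, a, a', b, h1, h2, h3, rfl⟩ | ⟨s, a, a', b, h1, h2, h3, rfl⟩) <;>
    simp only [Sum.inl.injEq, Prod.mk.injEq] at h3 <;> obtain ⟨rfl, rfl⟩ := h3 <;>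
    have h4 := hh s _ h1
    · exact ⟨a', by rw [((row_sing _ _ _).1 h2 _).1 h4]⟩
    · exact ⟨a, by rw [((col_sing _ _ _).1 h2 _).1 h4]⟩
    · exact ((row_empty _ _).1 h2 _ h4).elim
    · exact ((col_empty _ _).1 h2 _ h4).elim
  · rintro a b b' ⟨x, hx⟩ ⟨y, hy⟩
    simp only [Sum.inl.injEq, Prod.mk.injEq] at hx hy
    grind

end helpers

/-- `A` maps homomorphically to the implicational structure `B`
iff for every `a ∈ A` there is some `b ∈ B` such that in the conflict graph
there is no directed path from `(a,b)` to any node `(a,b')` with `b' ≠ b` nor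
to `□`. -/
theorem stmt9 {σ : Type} [Finite σ] (A B : BinStruct σ)
    (hAfin : Finite A.carrier) (hBfin : Finite B.carrier)
    (himp : ∀ s, Implicational (B.rel s)) :
    BinStruct.HomTo A B ↔
      ∀ a : A.carrier, ∃ b : B.carrier,
        (∀ b' : B.carrier, b' ≠ b →
          ¬ Relation.ReflTransGen (ConflictEdge A B)
              (Sum.inl (a, b)) (Sum.inl (a, b'))) ∧
        ¬ Relation.ReflTransGen (ConflictEdge A B)
            (Sum.inl (a, b)) (Sum.inr ()) := by
  constructor
  · rintro ⟨h, hh⟩ a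
    have hg := hom_good hh
    have ha : Sum.inl (a, h a) ∈ {z : A.carrier × B.carrier ⊕ Unit | ∃ a, z = Sum.inl (a, h a)} :=
      ⟨a, rfl⟩
    exact ⟨h a, fun b' hb' hp => hb' (hg.2.2 a _ _ (hg.path ha hp) ha),
      fun hp => hg.2.1 (hg.path ha hp)⟩
  · intro H
    have := Fintype.ofFinite A.carrier
    obtain ⟨T, hT, hF⟩ := exists_good himp H Finset.univ
    choose h hh using fun a => hF a (Finset.mem_univ a)
    refine ⟨h, fun s ⟨a, a'⟩ hp => imp3 (himp s) ?_ ?_ ?_⟩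
    · by_contra hne
      push Not at hne
      exact hT.2.1 (hT.1 _ (hh a) _
        (Or.inr (Or.inr (Or.inl ⟨s, a, a', h a, hp, (row_empty _ _).2 hne, rfl, rfl⟩))))
    · by_contra hne
      push Not at hne
      exact hT.2.1 (hT.1 _ (hh a') _
        (Or.inr (Or.inr (Or.inr ⟨s, a, a', h a', hp, (col_empty _ _).2 hne, rfl, rfl⟩))))
    · intro b' hb'
      exact hT.2.2 a' _ _ (hh a') (hT.1 _ (hh a) _
        (Or.inl ⟨s, a, a', h a, b', hp, (row_sing _ _ _).2 hb', rfl, rfl⟩))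
end

section
/- Let k ≥ 2 and let B be a finite τ-structure with universe {0,1} all of whose relations are in k-IHS-B+. Then B has (k, k−1+ρ(B))-path duality, where ρ(B) denotes the maximum arity of a relation symbol of τ: for every finite τ-structure A that does not homomorphically map to B, there exists a finite τ-structure P of pathwidth at most (k, k−1+ρ(B)) such that P homomorphically maps to A but not to B. Similarly, if all relations of B are in k-IHS-B−, then B has (k, k−1+ρ(B))-path duality. -/
/-- Clauses allowed in a `k`-IHS-B+ CNF over variables `x_1,…,x_r`:
`¬x_i`, `¬x_i ∨ x_j`, or `x_{i_1} ∨ … ∨ x_{i_k}`. -/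
inductive IHSPClause (r k : ℕ) where
  | negUnit (i : Fin r)
  | impl (i j : Fin r)
  | posK (w : Fin k → Fin r)

def IHSPClause.Holds {r k : ℕ} (t : Fin r → Bool) : IHSPClause r k → Prop
  | .negUnit i => t i = false
  | .impl i j => t i = false ∨ t j = true
  | .posK w => ∃ m, t (w m) = true

/-- Clauses allowed in a `k`-IHS-B− CNF over variables `x_1,…,x_r`:
`x_i`, `¬x_i ∨ x_j`, or `¬x_{i_1} ∨ … ∨ ¬x_{i_k}`. -/
inductive IHSMClause (r k : ℕ) where
  | posUnit (i : Fin r)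
  | impl (i j : Fin r)
  | negK (w : Fin k → Fin r)

def IHSMClause.Holds {r k : ℕ} (t : Fin r → Bool) : IHSMClause r k → Prop
  | .posUnit i => t i = true
  | .impl i j => t i = false ∨ t j = true
  | .negK w => ∃ m, t (w m) = false

/-- A Boolean relation is in `k`-IHS-B+. -/
def IsIHSBPlus (k : ℕ) {r : ℕ} (R : Set (Fin r → Bool)) : Prop :=
  ∃ cs : List (IHSPClause r k), R = {t | ∀ c ∈ cs, IHSPClause.Holds t c}

/-- A Boolean relation is in `k`-IHS-B−. -/
def IsIHSBMinus (k : ℕ) {r : ℕ} (R : Set (Fin r → Bool)) : Prop :=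
  ∃ cs : List (IHSMClause r k), R = {t | ∀ c ∈ cs, IHSMClause.Holds t c}

namespace Struct

variable {σ : Type} {ar : σ → ℕ}

def Ext (P : Struct σ ar) (s : σ) (tup : Fin (ar s) → P.carrier ⊕ Fin (ar s)) : Struct σ ar where
  carrier := P.carrier ⊕ Fin (ar s)
  rel r := {x | (∃ y ∈ P.rel r, x = fun i => Sum.inl (y i)) ∨
    (⟨r, x⟩ : Σ r, Fin (ar r) → P.carrier ⊕ Fin (ar s)) = ⟨s, tup⟩}

theorem ext_hom_out {P B : Struct σ ar} {s : σ} {tup : Fin (ar s) → P.carrier ⊕ Fin (ar s)}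
    {g : P.carrier ⊕ Fin (ar s) → B.carrier} (hg : IsHom (Ext P s tup) B g) :
    IsHom P B (fun x => g (Sum.inl x)) ∧ (fun l => g (tup l)) ∈ B.rel s := by
  constructor
  · intro r y hy
    exact hg r (fun i => Sum.inl (y i)) (Or.inl ⟨y, hy, rfl⟩)
  · exact hg s tup (Or.inr rfl)

theorem ext_hom_in {P A : Struct σ ar} {s : σ} {tup : Fin (ar s) → P.carrier ⊕ Fin (ar s)}
    {h : P.carrier → A.carrier} (hh : IsHom P A h) {t : Fin (ar s) → A.carrier}
    (ht : t ∈ A.rel s) (htup : ∀ l, Sum.elim h t (tup l) = t l) :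
    IsHom (Ext P s tup) A (Sum.elim h t) := by
  intro r x hx
  rcases hx with ⟨y, hy, rfl⟩ | hx
  · exact hh r y hy
  · cases hx
    have : (fun i => Sum.elim h t (tup i)) = t := funext htup
    rw [this]; exact ht

theorem ext_decomp {P : Struct σ ar} {s : σ} {tup : Fin (ar s) → P.carrier ⊕ Fin (ar s)}
    {n : ℕ} {S : Fin (n+1) → Set P.carrier} (hS : IsPathDecomp P S)
    (bag : Set (P.carrier ⊕ Fin (ar s))) (hb : ∀ l, tup l ∈ bag)
    (hb0 : ∀ x, Sum.inl x ∈ bag → x ∈ S 0) :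
    IsPathDecomp (Ext P s tup) (n := n+2)
      (Fin.cons bag (fun i => Sum.inl '' S i) : Fin (n+2) → Set (P.carrier ⊕ Fin (ar s))) := by
  constructor
  · intro r x hx
    rcases hx with ⟨y, hy, rfl⟩ | hx
    · obtain ⟨i, hi⟩ := hS.1 r y hy
      refine ⟨i.succ, fun m => ?_⟩
      rw [Fin.cons_succ]
      exact ⟨_, hi m, rfl⟩
    · cases hx
      exact ⟨0, hb⟩
  · intro a i l q hil hlq hi hq
    induction l using Fin.cases with
    | zero =>
      have : i = 0 := Fin.le_zero_iff.1 hil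
      rwa [this] at hi
    | succ l =>
      induction q using Fin.cases with
      | zero => exact absurd hlq (by simp [Fin.le_def])
      | succ q =>
        rw [Fin.cons_succ] at hq ⊢
        obtain ⟨x, hx, rfl⟩ := hq
        refine ⟨x, ?_, rfl⟩
        induction i using Fin.cases with
        | zero =>
          exact hS.2 x 0 l q (Fin.zero_le _) (Fin.succ_le_succ_iff.1 hlq) (hb0 x hi) hx
        | succ i =>
          rw [Fin.cons_succ] at hi
          obtain ⟨x', hx', he⟩ := hi
          cases he
          exact hS.2 x i l q (Fin.succ_le_succ_iff.1 hil) (Fin.succ_le_succ_iff.1 hlq) hx' hx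

theorem ext_width {P : Struct σ ar} {s : σ} {tup : Fin (ar s) → P.carrier ⊕ Fin (ar s)}
    {n : ℕ} {S : Fin (n+1) → Set P.carrier} {ι : Type} [Finite ι] {k W : ℕ}
    [Finite P.carrier]
    (hS : DecompWidthLE (A := P) S k W) (p : ι → P.carrier) (hι : Nat.card ι ≤ k)
    (bag : Set (P.carrier ⊕ Fin (ar s)))
    (hb0 : ∀ x, Sum.inl x ∈ bag → ∃ i, p i = x) (hW : bag.ncard ≤ W) :
    DecompWidthLE (A := Ext P s tup) (n := n+2)
      (Fin.cons bag (fun i => Sum.inl '' S i) : Fin (n+2) → Set (P.carrier ⊕ Fin (ar s))) k W := by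
  constructor
  · intro i
    induction i using Fin.cases with
    | zero => exact ⟨Set.toFinite bag, hW⟩
    | succ i =>
      rw [Fin.cons_succ]
      exact ⟨(hS.1 i).1.image _, (Set.ncard_image_le (hS.1 i).1).trans (hS.1 i).2⟩
  · intro i hi
    induction i using Fin.cases with
    | zero =>
      have e : (⟨((0 : Fin (n+2)) : ℕ) + 1, hi⟩ : Fin (n+2)) = Fin.succ 0 := by
        ext; simp
      rw [e, Fin.cons_succ, Fin.cons_zero]
      refine le_trans ?_ hι
      rw [← Set.ncard_univ]
      refine le_trans (Set.ncard_le_ncard (t := (fun i => Sum.inl (p i)) '' Set.univ) ?_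
        (Set.toFinite _)) (Set.ncard_image_le (Set.toFinite _))
      rintro _ ⟨h1, x, hx, rfl⟩
      obtain ⟨j, rfl⟩ := hb0 x h1
      exact ⟨j, trivial, rfl⟩
    | succ i =>
      have hi' : (i : ℕ) + 1 < n + 1 := by simpa using hi
      have e : (⟨((i.succ : Fin (n+2)) : ℕ) + 1, hi⟩ : Fin (n+2)) = Fin.succ ⟨i + 1, hi'⟩ := by
        ext; simp
      rw [e, Fin.cons_succ, Fin.cons_succ]
      have := Set.image_inter (f := (Sum.inl : P.carrier → P.carrier ⊕ Fin (ar s)))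
        (s := S i) (t := S ⟨i+1, hi'⟩) Sum.inl_injective
      refine le_trans (le_of_eq (congrArg Set.ncard this.symm)) ?_
      exact (Set.ncard_image_le (Set.toFinite _)).trans (hS.2 i hi')

def Good (A B : Struct σ ar) (k W : ℕ) (b : B.carrier) {ι : Type} (T : Set ι)
    (v : ι → A.carrier) : Prop :=
  ∃ (P : Struct σ ar) (n : ℕ) (S : Fin (n+1) → Set P.carrier) (h : P.carrier → A.carrier)
    (p : ι → P.carrier), Finite P.carrier ∧ IsPathDecomp P S ∧ DecompWidthLE (A := P) S k W ∧
    IsHom P A h ∧ (∀ i, p i ∈ S 0) ∧ (∀ i, h (p i) = v i) ∧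
    ∀ g, IsHom P B g → ∀ i ∈ T, g (p i) = b

inductive Forced (A : Struct σ ar) (U : ∀ s, Set (Fin (ar s)))
    (I : ∀ s, Set (Fin (ar s) × Fin (ar s))) : A.carrier → Prop
  | unit (s : σ) (t : Fin (ar s) → A.carrier) (ht : t ∈ A.rel s) (i : Fin (ar s)) (hi : i ∈ U s) :
      Forced A U I (t i)
  | step (s : σ) (t : Fin (ar s) → A.carrier) (ht : t ∈ A.rel s) (i j : Fin (ar s))
      (hi : (i, j) ∈ I s) (hj : Forced A U I (t j)) : Forced A U I (t i)

theorem good_of_forced {A B : Struct σ ar} {k ρ : ℕ} (hub : ∀ s, ar s ≤ ρ) (hρ : 1 ≤ ρ)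
    (hk : 2 ≤ k) {b : B.carrier} {U : ∀ s, Set (Fin (ar s))}
    {I : ∀ s, Set (Fin (ar s) × Fin (ar s))}
    (hU : ∀ s, ∀ x ∈ B.rel s, ∀ i ∈ U s, x i = b)
    (hI : ∀ s, ∀ x ∈ B.rel s, ∀ q ∈ I s, x q.2 = b → x q.1 = b)
    {ι : Type} [Finite ι] (hι : Nat.card ι ≤ k) (T : Finset ι) :
    ∀ v : ι → A.carrier, (∀ i ∈ T, Forced A U I (v i)) →
      Good A B k (k - 1 + ρ) b (T : Set ι) v := by
  classical
  induction T using Finset.induction_on with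
  | empty =>
    intro v _
    refine ⟨⟨ι, fun _ => ∅⟩, 0, fun _ => Set.univ, v, id, ‹_›, ⟨?_, ?_⟩, ⟨?_, ?_⟩, ?_, ?_, ?_, ?_⟩
    · intro s t ht; exact absurd ht (by simp)
    · intros; trivial
    · intro i
      refine ⟨Set.toFinite (Set.univ : Set ι), ?_⟩
      have : (Set.univ : Set ι).ncard = Nat.card ι := Set.ncard_univ ι
      show (Set.univ : Set ι).ncard ≤ _
      omega
    · intro i hi; omega
    · intro s t ht; exact absurd ht (by simp)
    · intro; trivial
    · intro; rfl
    · intro g _ i hi; simp at hi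
  | insert m T hm ih =>
    have key : ∀ a, Forced A U I a → ∀ v : ι → A.carrier, v m = a →
        (∀ i ∈ T, Forced A U I (v i)) → Good A B k (k - 1 + ρ) b (insert m (T : Set ι)) v := by
      intro a ha
      induction ha with
      | unit s t ht i hi =>
        intro v hv hT
        obtain ⟨P, n, S, h, p, hP, hS, hW, hh, hp0, hpv, hg⟩ := ih v hT
        let bag : Set (P.carrier ⊕ Fin (ar s)) :=
          (fun j => Sum.inl (p j)) '' {j | j ≠ m} ∪ Set.range Sum.inr
        have hbag : ∀ x, Sum.inl x ∈ bag → ∃ j, p j = x := by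
          rintro x (⟨j, -, hj⟩ | ⟨j, hj⟩)
          · exact ⟨j, Sum.inl_injective hj⟩
          · cases hj
        refine ⟨Ext P s Sum.inr, n+1, _, Sum.elim h t,
          fun j => if j = m then Sum.inr i else Sum.inl (p j),
          inferInstanceAs (Finite (P.carrier ⊕ Fin (ar s))),
          ext_decomp hS bag (fun l => Or.inr ⟨l, rfl⟩) ?_,
          ext_width hW p hι bag hbag ?_, ext_hom_in hh ht (fun l => rfl), ?_, ?_, ?_⟩
        · intro x hx
          obtain ⟨j, rfl⟩ := hbag x hx
          exact hp0 j
        · refine (Set.ncard_union_le _ _).trans (Nat.add_le_add ?_ ?_)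
          · refine (Set.ncard_image_le (Set.toFinite _)).trans ?_
            have h1 : {j : ι | j ≠ m} = Set.univ \ {m} := by ext; simp
            rw [h1, Set.ncard_diff_singleton_of_mem (Set.mem_univ m), Set.ncard_univ]
            omega
          · rw [← Set.image_univ]
            refine (Set.ncard_image_le (Set.toFinite _)).trans ?_
            rw [Set.ncard_univ, Nat.card_fin]; exact hub s
        · intro j
          rw [Fin.cons_zero]
          by_cases hj : j = m
          · simp only [hj, if_true]; exact Or.inr ⟨i, rfl⟩
          · simp only [hj, if_false]; exact Or.inl ⟨j, hj, rfl⟩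
        · intro j
          by_cases hj : j = m
          · simp [hj, hv]
          · simp [hj, hpv]
        · intro g hgh j hjT
          obtain ⟨g1, g2⟩ := ext_hom_out hgh
          by_cases hj : j = m
          · simp only [hj, if_true]; exact hU s _ g2 i hi
          · simp only [hj, if_false]
            exact hg _ g1 j (by simpa [hj] using hjT)
      | step s t ht i j hij hj ihj =>
        intro v hv hT
        obtain ⟨P, n, S, h, p, hP, hS, hW, hh, hp0, hpv, hg⟩ :=
          ihj (Function.update v m (t j)) (by simp) (by
            intro l hl
            rw [Function.update_of_ne (by rintro rfl; exact hm hl)]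
            exact hT l hl)
        let bag : Set (P.carrier ⊕ Fin (ar s)) :=
          (fun j => Sum.inl (p j)) '' Set.univ ∪ Sum.inr '' {l | l ≠ j}
        let tup : Fin (ar s) → P.carrier ⊕ Fin (ar s) :=
          fun l => if l = j then Sum.inl (p m) else Sum.inr l
        have htup : ∀ l, tup l ∈ bag := by
          intro l
          by_cases hl : l = j
          · simp only [tup, hl, if_true]; exact Or.inl ⟨m, trivial, rfl⟩
          · simp only [tup, hl, if_false]; exact Or.inr ⟨l, hl, rfl⟩
        have htt : ∀ l, Sum.elim h t (tup l) = t l := by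
          intro l
          by_cases hl : l = j
          · simp [tup, hl, hpv]
          · simp [tup, hl]
        have hbag : ∀ x, Sum.inl x ∈ bag → ∃ j, p j = x := by
          rintro x (⟨j, -, hj⟩ | ⟨j, -, hj⟩)
          · exact ⟨j, Sum.inl_injective hj⟩
          · cases hj
        refine ⟨Ext P s tup, n+1, _, Sum.elim h t,
          fun l => if l = m then tup i else Sum.inl (p l),
          inferInstanceAs (Finite (P.carrier ⊕ Fin (ar s))),
          ext_decomp hS bag htup ?_,
          ext_width hW p hι bag hbag ?_, ext_hom_in hh ht htt, ?_, ?_, ?_⟩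
        · intro x hx
          obtain ⟨j, rfl⟩ := hbag x hx
          exact hp0 j
        · have h1 := Set.ncard_image_le (f := fun j => (Sum.inl (p j) : P.carrier ⊕ Fin (ar s)))
            (Set.toFinite (Set.univ : Set ι))
          have h2 := Set.ncard_image_le (f := (Sum.inr : Fin (ar s) → P.carrier ⊕ Fin (ar s)))
            (Set.toFinite {l | l ≠ j})
          have h3 : {l : Fin (ar s) | l ≠ j} = Set.univ \ {j} := by ext; simp
          rw [h3, Set.ncard_diff_singleton_of_mem (Set.mem_univ j), Set.ncard_univ,
            Nat.card_fin, ← h3] at h2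
          rw [Set.ncard_univ] at h1
          have h4 := hub s
          have h5 := j.pos
          refine (Set.ncard_union_le _ _).trans ?_
          omega
        · intro l
          rw [Fin.cons_zero]
          by_cases hl : l = m
          · simp only [hl, if_true]; exact htup i
          · simp only [hl, if_false]; exact Or.inl ⟨l, trivial, rfl⟩
        · intro l
          by_cases hl : l = m
          · simp only [hl, if_true, hv]; exact htt i
          · simp [hl, hpv]
        · intro g hgh l hlT
          obtain ⟨g1, g2⟩ := ext_hom_out hgh
          by_cases hl : l = m
          · simp only [hl, if_true]
            refine hI s _ g2 (i, j) hij ?_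
            simp only [tup, if_true]
            exact hg _ g1 m (by simp)
          · simp only [hl, if_false]
            exact hg _ g1 l hlT
    intro v hv
    have := key (v m) (hv m (by simp)) v rfl (fun i hi => hv i (by simp [hi]))
    simpa using this

theorem duality_aux {k ρ : ℕ} (hk : 2 ≤ k) (hub : ∀ s, ar s ≤ ρ)
    (b : Bool) (Brel : ∀ s : σ, Set (Fin (ar s) → Bool)) (U : ∀ s, Set (Fin (ar s)))
    (I : ∀ s, Set (Fin (ar s) × Fin (ar s))) (C : ∀ s, Set (Fin k → Fin (ar s)))
    (hB : ∀ s x, x ∈ Brel s ↔ (∀ i ∈ U s, x i = b) ∧ (∀ q ∈ I s, x q.2 = b → x q.1 = b) ∧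
      ∀ w ∈ C s, ∃ m, x (w m) ≠ b)
    (A : Struct σ ar) (hA : ¬ HomTo A ⟨Bool, Brel⟩) :
    ∃ P : Struct σ ar, Finite P.carrier ∧ PathwidthLE P k (k - 1 + ρ) ∧
      HomTo P A ∧ ¬ HomTo P ⟨Bool, Brel⟩ := by
  classical
  obtain ⟨s, t, ht, w, hw, hf⟩ : ∃ s, ∃ t ∈ A.rel s, ∃ w ∈ C s, ∀ m, Forced A U I (t (w m)) := by
    by_contra hcon
    push Not at hcon
    refine hA ⟨fun a => if Forced A U I a then b else !b, ?_⟩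
    intro s t ht
    refine (hB s _).2 ⟨?_, ?_, ?_⟩
    · intro i hi
      simp [Forced.unit s t ht i hi]
    · rintro ⟨i, j⟩ hij hj
      by_cases hjf : Forced A U I (t j)
      · simp [Forced.step s t ht i j hij hjf]
      · simp [hjf] at hj
    · intro w hw
      obtain ⟨m, hm⟩ := hcon s t ht w hw
      exact ⟨m, by simp [hm]⟩
  have hρ : 1 ≤ ρ := by
    have := (w ⟨0, by omega⟩).pos
    have := hub s
    omega
  let ι := ↥(Set.range w)
  have hι : Nat.card ι ≤ k := by
    have := Finite.card_range_le w
    rwa [Nat.card_fin] at this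
  obtain ⟨P, n, S, h, p, hP, hS, hW, hh, hp0, hpv, hg⟩ :=
    good_of_forced (A := A) (B := ⟨Bool, Brel⟩) (b := b) hub hρ hk
      (fun s x hx => ((hB s x).1 hx).1) (fun s x hx => ((hB s x).1 hx).2.1) hι
      (Set.toFinite (Set.univ : Set ι)).toFinset (fun i => t i.1)
      (by rintro ⟨_, m, rfl⟩ _; exact hf m)
  let tup : Fin (ar s) → P.carrier ⊕ Fin (ar s) :=
    fun l => if hl : l ∈ Set.range w then Sum.inl (p ⟨l, hl⟩) else Sum.inr l
  have hbag : ∀ x, Sum.inl x ∈ Set.range tup → ∃ j, p j = x := by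
    rintro x ⟨l, hl⟩
    by_cases hlw : l ∈ Set.range w
    · simp only [tup, hlw, dif_pos] at hl
      exact ⟨_, Sum.inl_injective hl⟩
    · simp only [tup, hlw, dif_neg, not_false_eq_true] at hl
      cases hl
  refine ⟨Ext P s tup, inferInstanceAs (Finite (P.carrier ⊕ Fin (ar s))), ⟨n+2, _,
    ext_decomp hS (Set.range tup) (fun l => ⟨l, rfl⟩) ?_, ext_width hW p hι _ hbag ?_⟩,
    ⟨Sum.elim h t, ext_hom_in hh ht ?_⟩, ?_⟩
  · intro x hx
    obtain ⟨j, rfl⟩ := hbag x hx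
    exact hp0 j
  · rw [← Set.image_univ]
    refine (Set.ncard_image_le (Set.toFinite _)).trans ?_
    rw [Set.ncard_univ, Nat.card_fin]
    have := hub s
    omega
  · intro l
    by_cases hl : l ∈ Set.range w
    · simp only [tup, hl, dif_pos, Sum.elim_inl, hpv]
    · simp only [tup, hl, dif_neg, not_false_eq_true, Sum.elim_inr]
  · rintro ⟨g, hgh⟩
    obtain ⟨g1, g2⟩ := ext_hom_out hgh
    obtain ⟨m, hm⟩ := ((hB s _).1 g2).2.2 w hw
    apply hm
    have hmw : w m ∈ Set.range w := ⟨m, rfl⟩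
    simp only [tup, hmw, dif_pos]
    exact hg _ g1 ⟨w m, hmw⟩ (by simp)

end Struct

/-- every structure `B` over `{0,1}` all of whose relations are in
`k`-IHS-B+ (or all in `k`-IHS-B−) has `(k, k−1+ρ(B))`-path duality, where
`ρ` is the maximum arity of the vocabulary. -/
theorem stmt10 {σ : Type} {ar : σ → ℕ} [Finite σ] (k : ℕ) (hk : 2 ≤ k)
    (Brel : ∀ s : σ, Set (Fin (ar s) → Bool))
    (ρ : ℕ) (hub : ∀ s, ar s ≤ ρ) (hmax : ∃ s, ar s = ρ)
    (hIHS : (∀ s, IsIHSBPlus k (Brel s)) ∨ (∀ s, IsIHSBMinus k (Brel s))) :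
    ∀ A : Struct σ ar, Finite A.carrier →
      ¬ Struct.HomTo A ⟨Bool, Brel⟩ →
        ∃ P : Struct σ ar, Finite P.carrier ∧
          Struct.PathwidthLE P k (k - 1 + ρ) ∧
          Struct.HomTo P A ∧ ¬ Struct.HomTo P ⟨Bool, Brel⟩ := by
  intro A _ hA
  rcases hIHS with h | h
  · choose cs hcs using h
    refine Struct.duality_aux hk hub false Brel (fun s => {i | .negUnit i ∈ cs s})
      (fun s => {q | .impl q.1 q.2 ∈ cs s}) (fun s => {w | .posK w ∈ cs s}) ?_ A hA
    intro s x
    rw [hcs s]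
    constructor
    · intro hx
      refine ⟨fun i hi => hx _ hi, fun q hq hq2 => ?_, fun w hw => ?_⟩
      · have := hx _ hq
        simp only [IHSPClause.Holds] at this
        rcases this with h | h
        · exact h
        · rw [h] at hq2; cases hq2
      · obtain ⟨m, hm⟩ := hx _ hw
        exact ⟨m, by simp [hm]⟩
    · rintro ⟨h1, h2, h3⟩ c hc
      cases c with
      | negUnit i => exact h1 i hc
      | impl i j =>
        have := h2 (i, j) hc
        simp only [IHSPClause.Holds]
        cases hj : x j
        · exact Or.inl (this hj)
        · exact Or.inr rfl
      | posK w =>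
        obtain ⟨m, hm⟩ := h3 w hc
        exact ⟨m, by simpa using hm⟩
  · choose cs hcs using h
    refine Struct.duality_aux hk hub true Brel (fun s => {i | .posUnit i ∈ cs s})
      (fun s => {q | .impl q.2 q.1 ∈ cs s}) (fun s => {w | .negK w ∈ cs s}) ?_ A hA
    intro s x
    rw [hcs s]
    constructor
    · intro hx
      refine ⟨fun i hi => hx _ hi, fun q hq hq2 => ?_, fun w hw => ?_⟩
      · have := hx _ hq
        simp only [IHSMClause.Holds] at this
        rcases this with h | h
        · rw [h] at hq2; cases hq2
        · exact h
      · obtain ⟨m, hm⟩ := hx _ hw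
        exact ⟨m, by simp [hm]⟩
    · rintro ⟨h1, h2, h3⟩ c hc
      cases c with
      | posUnit i => exact h1 i hc
      | impl i j =>
        have := h2 (j, i) hc
        simp only [IHSMClause.Holds]
        cases hi : x i
        · exact Or.inl rfl
        · exact Or.inr (this hi)
      | negK w =>
        obtain ⟨m, hm⟩ := h3 w hc
        exact ⟨m, by simpa using hm⟩
end

section
/- Let k ≥ 2, let B be a finite τ-structure with universe {0,1} all of whose relations are in k-IHS-B+, and let A be a finite τ-structure that does not homomorphically map to B. Then there exist elements a^i_j ∈ A for 1 ≤ i ≤ k and 1 ≤ j ≤ l_i such that the partial mapping (a^1_1 → 0, …, a^k_1 → 0) is forbidden, for each i ∈ {1,…,k} the partial mapping (a^i_{l_i} → 1) is forbidden, and for each i ∈ {1,…,k} and each j ∈ {1,…,l_i−1} the partial mapping (a^i_j → 1, a^i_{j+1} → 0) is forbidden (all with respect to A and B). -/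
/-- Projection `T_{|i_1,…,i_m}` of an `r`-ary relation along a (not
necessarily injective) index map. -/
def projRel {α : Type} {r m : ℕ} (idx : Fin m → Fin r)
    (T : Set (Fin r → α)) : Set (Fin m → α) :=
  (fun t => fun p => t (idx p)) '' T

/-- The partial mapping `(a_1 → b_1, …, a_m → b_m)` is forbidden with respect to
the instance `A` and the Boolean template with relations `Brel`. -/
def Forbidden {σ : Type} {ar : σ → ℕ} (A : Struct σ ar)
    (Brel : ∀ s : σ, Set (Fin (ar s) → Bool)) {m : ℕ}
    (a : Fin m → A.carrier) (b : Fin m → Bool) : Prop :=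
  ∃ (s : σ) (idx : Fin m → Fin (ar s)),
    a ∈ projRel idx (A.rel s) ∧ b ∉ projRel idx (Brel s)

/-- if `B` is a `{0,1}`-structure all of whose relations are in
`k`-IHS-B+ and `A` does not homomorphically map to `B`, then there are chains
of elements of `A` witnessing the forbidden partial mappings guaranteed by
Lemma 5.5 of the paper. -/
theorem stmt12 {σ : Type} {ar : σ → ℕ} [Finite σ] (k : ℕ) (hk : 2 ≤ k)
    (Brel : ∀ s : σ, Set (Fin (ar s) → Bool))
    (hIHS : ∀ s, IsIHSBPlus k (Brel s))
    (A : Struct σ ar) (hAfin : Finite A.carrier)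
    (hnohom : ¬ Struct.HomTo A ⟨Bool, Brel⟩) :
    ∃ (l : Fin k → ℕ) (a : ∀ i : Fin k, Fin (l i + 1) → A.carrier),
      Forbidden A Brel (fun i : Fin k => a i 0) (fun _ => false) ∧
      (∀ i : Fin k,
        Forbidden A Brel (fun _ : Fin 1 => a i (Fin.last (l i)))
          (fun _ : Fin 1 => true)) ∧
      (∀ i : Fin k, ∀ j : Fin (l i),
        Forbidden A Brel ![a i j.castSucc, a i j.succ] ![true, false]) := by
  classical
  let P : A.carrier → Prop := fun x => ∃ (l : ℕ) (c : Fin (l + 1) → A.carrier), c 0 = x ∧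
    Forbidden A Brel (fun _ : Fin 1 => c (Fin.last l)) (fun _ : Fin 1 => true) ∧
    ∀ j : Fin l, Forbidden A Brel ![c j.castSucc, c j.succ] ![true, false]
  have hcons : ∀ x y, Forbidden A Brel ![x, y] ![true, false] → P y → P x := by
    rintro x y hxy ⟨l, c, rfl, h1, h2⟩
    refine ⟨l + 1, Fin.cons x c, rfl, ?_, ?_⟩
    · simpa [← Fin.succ_last] using h1
    · intro j
      refine Fin.cases ?_ (fun j => ?_) j
      · simpa using hxy
      · have := h2 j
        simpa [← Fin.succ_castSucc] using this
  have hbase : ∀ x, Forbidden A Brel (fun _ : Fin 1 => x) (fun _ : Fin 1 => true) → P x :=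
    fun x hx => ⟨0, fun _ => x, rfl, hx, fun j => j.elim0⟩
  have hmain : ∃ a : Fin k → A.carrier, Forbidden A Brel a (fun _ => false) ∧ ∀ i, P (a i) := by
    by_contra hcon
    apply hnohom
    refine ⟨fun x => !decide (P x), ?_⟩
    intro s t ht
    obtain ⟨cs, hcs⟩ := hIHS s
    change (fun i => !decide (P (t i))) ∈ Brel s
    rw [hcs]
    intro c hc
    have hB : ∀ u ∈ Brel s, IHSPClause.Holds u c := by
      intro u hu
      rw [hcs] at hu
      exact hu c hc
    cases c with
    | negUnit i =>
      have : P (t i) := by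
        apply hbase
        refine ⟨s, fun _ => i, ⟨t, ht, rfl⟩, ?_⟩
        rintro ⟨u, hu, he⟩
        have h1 : u i = false := hB u hu
        have h2 : u i = true := congrFun he 0
        simp [h1] at h2
      simp [IHSPClause.Holds, this]
    | impl i j =>
      have : P (t j) → P (t i) := by
        apply hcons
        refine ⟨s, ![i, j], ⟨t, ht, ?_⟩, ?_⟩
        · funext p
          fin_cases p <;> rfl
        rintro ⟨u, hu, he⟩
        have h1 : u i = false ∨ u j = true := hB u hu
        have h2 : u i = true := congrFun he 0
        have h3 : u j = false := congrFun he 1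
        simp [h2, h3] at h1
      by_cases hj : P (t j)
      · simp [IHSPClause.Holds, this hj]
      · simp [IHSPClause.Holds, hj]
    | posK w =>
      by_contra hn
      apply hcon
      refine ⟨fun m => t (w m), ⟨s, w, ⟨t, ht, rfl⟩, ?_⟩, ?_⟩
      · rintro ⟨u, hu, he⟩
        obtain ⟨m, hm⟩ : ∃ m, u (w m) = true := hB u hu
        have h2 : u (w m) = false := congrFun he m
        simp [h2] at hm
      · intro m
        by_contra hm
        exact hn ⟨m, by simp [hm]⟩
  obtain ⟨a, ha, hP⟩ := hmain
  choose l c h0 h1 h2 using hP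
  refine ⟨l, c, ?_, h1, h2⟩
  simpa only [h0] using ha
end

section
/- Let 0 ≤ j ≤ k be non-negative integers. Every finite τ-structure P that has a path-decomposition of width at most (j,k) also has a canonical path-decomposition of width at most (j,k): a path-decomposition S_1,…,S_n such that S_n = ∅ and for every 1 ≤ i ≤ n−1 either S_i ⊆ S_{i+1} or S_{i+1} ⊆ S_i. -/
/-- every finite structure with a path-decomposition of width at
most `(j,k)` has a canonical path-decomposition of width at most `(j,k)`:
one whose last bag is empty and in which any two consecutive bags are
comparable under inclusion. -/
theorem stmt15 {σ : Type} {ar : σ → ℕ} [Finite σ] (j k : ℕ) (hjk : j ≤ k)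
    (P : Struct σ ar) (hPfin : Finite P.carrier)
    (hpw : Struct.PathwidthLE P j k) :
    ∃ (n : ℕ) (S : Fin (n + 1) → Set P.carrier),
      Struct.IsPathDecomp P S ∧ Struct.DecompWidthLE S j k ∧
      S (Fin.last n) = ∅ ∧
      ∀ i : Fin n, S i.castSucc ⊆ S i.succ ∨ S i.succ ⊆ S i.castSucc := by
  obtain ⟨n, S, ⟨hcov, hint⟩, hcard, hadj⟩ := hpw
  let E : ℕ → Set P.carrier := fun m => {a | ∃ h : m < n, a ∈ S ⟨m, h⟩}
  have hE : ∀ a i l p, i ≤ l → l ≤ p → a ∈ E i → a ∈ E p → a ∈ E l := by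
    rintro a i l p hil hlp ⟨hi, ha⟩ ⟨hp, hb⟩
    exact ⟨by omega, hint a ⟨i, hi⟩ ⟨l, by omega⟩ ⟨p, hp⟩ hil hlp ha hb⟩
  have hEc : ∀ m, (E m).ncard ≤ k := by
    intro m
    by_cases h : m < n
    · refine le_trans (Set.ncard_le_ncard ?_ (Set.toFinite _)) (hcard ⟨m, h⟩).2
      rintro a ⟨_, ha⟩
      exact ha
    · have : E m = ∅ := by
        ext a
        simp [E, h]
      simp [this]
  have hEa : ∀ m, (E m ∩ E (m + 1)).ncard ≤ j := by
    intro m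
    by_cases h : m + 1 < n
    · refine le_trans (Set.ncard_le_ncard ?_ (Set.toFinite _)) (hadj ⟨m, by omega⟩ h)
      rintro a ⟨⟨_, ha⟩, ⟨_, hb⟩⟩
      exact ⟨ha, hb⟩
    · have : E m ∩ E (m + 1) = ∅ := by
        ext a
        simp [E, h]
      simp [this]
  refine ⟨2 * n, fun m => E (m.1 / 2) ∩ E ((m.1 + 1) / 2), ⟨?_, ?_⟩, ⟨?_, ?_⟩, ?_, ?_⟩
  · intro s t ht
    obtain ⟨i, hi⟩ := hcov s t ht
    refine ⟨⟨2 * i.1, by omega⟩, fun m => ?_⟩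
    have h1 : 2 * i.1 / 2 = i.1 := by omega
    have h2 : (2 * i.1 + 1) / 2 = i.1 := by omega
    simp only [h1, h2]
    exact ⟨⟨i.2, hi m⟩, ⟨i.2, hi m⟩⟩
  · intro a i l p hil hlp hi hp
    have hil' : i.1 ≤ l.1 := hil
    have hlp' : l.1 ≤ p.1 := hlp
    exact ⟨hE a (i.1 / 2) _ ((p.1 + 1) / 2) (by omega) (by omega) hi.1 hp.2,
      hE a (i.1 / 2) _ ((p.1 + 1) / 2) (by omega) (by omega) hi.1 hp.2⟩
  · intro i
    exact ⟨Set.toFinite _,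
      le_trans (Set.ncard_le_ncard Set.inter_subset_left (Set.toFinite _)) (hEc _)⟩
  · intro i h
    refine le_trans (Set.ncard_le_ncard ?_ (Set.toFinite _)) (hEa (i.1 / 2))
    rintro a ⟨⟨h1, _⟩, ⟨_, h4⟩⟩
    have : (i.1 + 1 + 1) / 2 = i.1 / 2 + 1 := by omega
    simp only [this] at h4
    exact ⟨h1, h4⟩
  · ext a
    simp [E]
  · intro i
    simp only [Fin.val_castSucc, Fin.val_succ]
    rcases Nat.even_or_odd' i.1 with ⟨c, hc | hc⟩
    · right
      have h1 : i.1 / 2 = c := by omega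
      have h2 : (i.1 + 1) / 2 = c := by omega
      rw [h1, h2]
      exact fun a ha => ⟨ha.1, ha.1⟩
    · left
      have h2 : (i.1 + 1) / 2 = c + 1 := by omega
      have h3 : (i.1 + 1 + 1) / 2 = c + 1 := by omega
      rw [h2, h3]
      exact fun a ha => ⟨ha.2, ha.2⟩
end
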